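/- arXiv:2204.00580 — 11 statements merged into one kernel-verified Lean document; each statement's English description precedes it below -/
import Mathlib

section
/- For every δ > 0: if x ≥ x* + δ then b₁δ(x) > 0, and if x ≤ x* − δ then b₁δ(x) < 0. In particular the vector field of the average system ẋₐ = −(γ/2)·b₁δ(xₐ) points towards x* everywhere outside the interval [x* − δ, x* + δ]. -/
open Real MeasureTheory intervalIntegral Filter

/-- First Fourier sine coefficient of `t ↦ h (x + δ sin (2π t))`. -/
noncomputable def b1 (h : ℝ → ℝ) (δ x : ℝ) : ℝ :=
  2 * ∫ t in (0:ℝ)..1, h (x + δ * Real.sin (2 * Real.pi * t)) * Real.sin (2 * Real.pi * t)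

theorem b1_pos_aux (g : ℝ → ℝ) (hg : Continuous g) (δ x : ℝ) (hδ : 0 < δ)
    (hm : StrictMonoOn g (Set.Icc (x - δ) (x + δ))) : 0 < b1 g δ x := by
  have hsin : ∫ t in (0:ℝ)..1, Real.sin (2 * Real.pi * t) = 0 := by
    rw [intervalIntegral.integral_comp_mul_left (fun u => Real.sin u) (by positivity)]
    simp
  have hkey : 0 < ∫ t in (0:ℝ)..1,
      (g (x + δ * Real.sin (2 * Real.pi * t)) - g x) * Real.sin (2 * Real.pi * t) := by
    apply intervalIntegral.integral_pos one_pos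
    · fun_prop
    · intro t _
      have h1 := Real.neg_one_le_sin (2 * Real.pi * t)
      have h2 := Real.sin_le_one (2 * Real.pi * t)
      generalize Real.sin (2 * Real.pi * t) = s at h1 h2 ⊢
      have hx : x ∈ Set.Icc (x - δ) (x + δ) := ⟨by linarith, by linarith⟩
      have hs : x + δ * s ∈ Set.Icc (x - δ) (x + δ) := ⟨by nlinarith, by nlinarith⟩
      rcases le_total 0 s with h | h
      · have := hm.monotoneOn hx hs (by nlinarith)
        exact mul_nonneg (by linarith) h
      · have := hm.monotoneOn hs hx (by nlinarith)
        exact mul_nonneg_of_nonpos_of_nonpos (by linarith) h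
    · refine ⟨1 / 4, ⟨by norm_num, by norm_num⟩, ?_⟩
      have : 2 * Real.pi * (1 / 4) = Real.pi / 2 := by ring
      rw [this, Real.sin_pi_div_two]
      have := hm (a := x) (b := x + δ) ⟨by linarith, by linarith⟩ ⟨by linarith, by linarith⟩
        (by linarith)
      simp only [mul_one]
      linarith
  have e : ∫ t in (0:ℝ)..1,
      (g (x + δ * Real.sin (2 * Real.pi * t)) - g x) * Real.sin (2 * Real.pi * t)
      = ∫ t in (0:ℝ)..1, g (x + δ * Real.sin (2 * Real.pi * t)) * Real.sin (2 * Real.pi * t) := by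
    simp only [sub_mul]
    rw [intervalIntegral.integral_sub (Continuous.intervalIntegrable (by fun_prop) _ _)
      (Continuous.intervalIntegrable (by fun_prop) _ _), intervalIntegral.integral_const_mul, hsin]
    simp
  unfold b1
  rw [← e]
  linarith

/-- sign of `b1` outside `[x* - δ, x* + δ]`. -/
theorem b1_sign_outside (h : ℝ → ℝ) (hsmooth : ContDiff ℝ (⊤ : ℕ∞) h)
    (xstar : ℝ) (hmin : ∀ x : ℝ, x ≠ xstar → h xstar < h x)
    (α : ℝ → ℝ) (hα_cont : ContinuousOn α (Set.Ici 0))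
    (hα_mono : StrictMonoOn α (Set.Ici 0)) (hα0 : α 0 = 0)
    (hα_top : Tendsto α atTop atTop)
    (hlb : ∀ x₁ x₂ : ℝ, (x₁ - xstar) * (x₂ - xstar) ≥ 0 → α |x₂ - x₁| ≤ |h x₂ - h x₁|)
    (δ : ℝ) (hδ : 0 < δ) :
    (∀ x : ℝ, xstar + δ ≤ x → 0 < b1 h δ x) ∧
    (∀ x : ℝ, x ≤ xstar - δ → b1 h δ x < 0) := by
  have hc : Continuous h := hsmooth.continuous
  have hinj : ∀ a b : ℝ, (a - xstar) * (b - xstar) ≥ 0 → h a = h b → a = b := by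
    intro a b hab he
    by_contra hne
    have h1 := hlb a b hab
    have hp : 0 < |b - a| := abs_pos.mpr (sub_ne_zero.mpr (Ne.symm hne))
    have h2 := hα_mono (a := 0) (b := |b - a|) Set.self_mem_Ici hp.le hp
    rw [he, sub_self, abs_zero] at h1
    linarith
  have hle : ∀ x, h xstar ≤ h x := by
    intro x
    by_cases hx : x = xstar
    · rw [hx]
    · exact (hmin x hx).le
  constructor
  · intro x hx
    apply b1_pos_aux h hc δ x hδ
    have := ContinuousOn.strictMonoOn_of_injOn_Icc (a := xstar) (b := x + δ) (f := h)
      (by linarith) (hle _) hc.continuousOn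
      (fun a ha b hb => hinj a b (mul_nonneg (by linarith [ha.1]) (by linarith [hb.1])))
    exact this.mono (Set.Icc_subset_Icc (by linarith) le_rfl)
  · intro x hx
    have h1 : 0 < b1 (fun y => - h y) δ x := by
      apply b1_pos_aux _ hc.neg δ x hδ
      have := ContinuousOn.strictAntiOn_of_injOn_Icc (a := x - δ) (b := xstar) (f := h)
        (by linarith) (hle _) hc.continuousOn
        (fun a ha b hb => hinj a b
          (mul_nonneg_of_nonpos_of_nonpos (by linarith [ha.2]) (by linarith [hb.2])))
      intro a ha b hb hab
      exact neg_lt_neg (this (Set.Icc_subset_Icc le_rfl (by linarith) ha)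
        (Set.Icc_subset_Icc le_rfl (by linarith) hb) hab)
    have h2 : b1 (fun y => - h y) δ x = - b1 h δ x := by
      simp [b1]
    linarith
end

section
/- For every δ > 0 and every x ≥ x* + δ one has the quantitative lower bound b₁δ(x) ≥ 2∫₀^{1/2} α(2δ sin(2πt)) · sin(2πt) dt > 0, and symmetrically, for every x ≤ x* − δ, b₁δ(x) ≤ −2∫₀^{1/2} α(2δ sin(2πt)) · sin(2πt) dt < 0. -/
open Real MeasureTheory intervalIntegral Filter

/-- Folding the integral over a period onto its first half. -/
theorem aux_b1_eq (h : ℝ → ℝ) (hc : Continuous h) (δ x : ℝ) :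
    b1 h δ x = 2 * ∫ t in (0:ℝ)..(1/2),
      (h (x + δ * Real.sin (2 * Real.pi * t)) - h (x - δ * Real.sin (2 * Real.pi * t)))
        * Real.sin (2 * Real.pi * t) := by
  unfold b1
  set f : ℝ → ℝ := fun t => h (x + δ * Real.sin (2 * Real.pi * t)) * Real.sin (2 * Real.pi * t)
    with hf
  have hfc : Continuous f := by rw [hf]; fun_prop
  have h1 : (∫ t in (0:ℝ)..1, f t) = (∫ t in (0:ℝ)..(1/2), f t) + ∫ t in (1/2:ℝ)..1, f t :=
    (intervalIntegral.integral_add_adjacent_intervals (hfc.intervalIntegrable _ _)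
      (hfc.intervalIntegrable _ _)).symm
  have h2 : (∫ t in (1/2:ℝ)..1, f t) = ∫ t in (0:ℝ)..(1/2), f (t + 1/2) := by
    rw [intervalIntegral.integral_comp_add_right]; norm_num
  have hfc2 : Continuous (fun t => f (t + 1/2)) := by fun_prop
  rw [h1, h2, ← intervalIntegral.integral_add (hfc.intervalIntegrable _ _)
    (hfc2.intervalIntegrable _ _)]
  congr 1
  apply intervalIntegral.integral_congr
  intro t _
  have hs : Real.sin (2 * Real.pi * (t + 1/2)) = - Real.sin (2 * Real.pi * t) := by
    rw [← Real.sin_add_pi]; congr 1; ring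
  simp only [hf, hs]
  rw [show x + δ * -Real.sin (2 * Real.pi * t) = x - δ * Real.sin (2 * Real.pi * t) by ring]
  ring

theorem aux_sin_nonneg {t : ℝ} (ht : t ∈ Set.Icc (0:ℝ) (1/2)) :
    0 ≤ Real.sin (2 * Real.pi * t) := by
  have := Real.pi_pos
  apply Real.sin_nonneg_of_nonneg_of_le_pi
  · have := ht.1; positivity
  · nlinarith [ht.2]

/-- The growth bound without absolute values, to the right of the minimiser. -/
theorem aux_growth (h : ℝ → ℝ) (hc : Continuous h)
    (xstar : ℝ) (hmin : ∀ x : ℝ, x ≠ xstar → h xstar < h x)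
    (α : ℝ → ℝ) (hα_mono : StrictMonoOn α (Set.Ici 0)) (hα0 : α 0 = 0)
    (hlb : ∀ x₁ x₂ : ℝ, (x₁ - xstar) * (x₂ - xstar) ≥ 0 → α |x₂ - x₁| ≤ |h x₂ - h x₁|)
    (a b : ℝ) (ha : xstar ≤ a) (hab : a ≤ b) : α (b - a) ≤ h b - h a := by
  have key : h a ≤ h b := by
    by_contra! hlt
    have hne : a ≠ b := by rintro rfl; exact lt_irrefl _ hlt
    have hab' : a < b := lt_of_le_of_ne hab hne
    have hb : h xstar < h b := hmin b (lt_of_le_of_lt ha hab').ne'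
    obtain ⟨c, hcm, hce⟩ := intermediate_value_Icc ha hc.continuousOn ⟨hb.le, hlt.le⟩
    have h1 := hlb c b (mul_nonneg (by linarith [hcm.1]) (by linarith))
    have hpos : 0 < b - c := by linarith [hcm.2]
    rw [hce, sub_self, abs_zero, abs_of_pos hpos] at h1
    have h2 := hα_mono (Set.mem_Ici.2 le_rfl) (Set.mem_Ici.2 hpos.le) hpos
    linarith
  have h1 := hlb a b (mul_nonneg (by linarith) (by linarith))
  rwa [abs_of_nonneg (by linarith), abs_of_nonneg (by linarith)] at h1

theorem aux_integrable (α : ℝ → ℝ) (hα_cont : ContinuousOn α (Set.Ici 0))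
    (δ : ℝ) (hδ : 0 < δ) :
    ContinuousOn (fun t : ℝ => α (2 * δ * Real.sin (2 * Real.pi * t)) * Real.sin (2 * Real.pi * t))
      (Set.Icc (0:ℝ) (1/2)) := by
  apply ContinuousOn.mul
  · apply hα_cont.comp (by fun_prop)
    intro t ht
    have := aux_sin_nonneg ht
    exact Set.mem_Ici.2 (by positivity)
  · fun_prop

theorem aux_right (h : ℝ → ℝ) (hc : Continuous h)
    (xstar : ℝ) (hmin : ∀ x : ℝ, x ≠ xstar → h xstar < h x)
    (α : ℝ → ℝ) (hα_cont : ContinuousOn α (Set.Ici 0))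
    (hα_mono : StrictMonoOn α (Set.Ici 0)) (hα0 : α 0 = 0)
    (hlb : ∀ x₁ x₂ : ℝ, (x₁ - xstar) * (x₂ - xstar) ≥ 0 → α |x₂ - x₁| ≤ |h x₂ - h x₁|)
    (δ : ℝ) (hδ : 0 < δ) (x : ℝ) (hx : xstar + δ ≤ x) :
    2 * (∫ t in (0:ℝ)..(1/2), α (2 * δ * Real.sin (2 * Real.pi * t)) * Real.sin (2 * Real.pi * t))
        ≤ b1 h δ x := by
  rw [aux_b1_eq h hc]
  refine mul_le_mul_of_nonneg_left ?_ (by norm_num)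
  apply intervalIntegral.integral_mono_on (by norm_num)
  · apply ContinuousOn.intervalIntegrable_of_Icc (by norm_num)
    exact aux_integrable α hα_cont δ hδ
  · apply Continuous.intervalIntegrable
    fun_prop
  · intro t ht
    have hs := aux_sin_nonneg ht
    have hs1 := Real.sin_le_one (2 * Real.pi * t)
    refine mul_le_mul_of_nonneg_right ?_ hs
    have := aux_growth h hc xstar hmin α hα_mono hα0 hlb
      (x - δ * Real.sin (2 * Real.pi * t)) (x + δ * Real.sin (2 * Real.pi * t))
      (by nlinarith) (by nlinarith)
    rwa [show x + δ * Real.sin (2 * Real.pi * t) - (x - δ * Real.sin (2 * Real.pi * t))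
      = 2 * δ * Real.sin (2 * Real.pi * t) by ring] at this

/-- quantitative lower bound on `b1` outside `[x* - δ, x* + δ]`. -/
theorem b1_quantitative_bound (h : ℝ → ℝ) (hsmooth : ContDiff ℝ (⊤ : ℕ∞) h)
    (xstar : ℝ) (hmin : ∀ x : ℝ, x ≠ xstar → h xstar < h x)
    (α : ℝ → ℝ) (hα_cont : ContinuousOn α (Set.Ici 0))
    (hα_mono : StrictMonoOn α (Set.Ici 0)) (hα0 : α 0 = 0)
    (hα_top : Tendsto α atTop atTop)
    (hlb : ∀ x₁ x₂ : ℝ, (x₁ - xstar) * (x₂ - xstar) ≥ 0 → α |x₂ - x₁| ≤ |h x₂ - h x₁|)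
    (δ : ℝ) (hδ : 0 < δ) :
    (0 < 2 * ∫ t in (0:ℝ)..(1/2), α (2 * δ * Real.sin (2 * Real.pi * t)) * Real.sin (2 * Real.pi * t)) ∧
    (∀ x : ℝ, xstar + δ ≤ x →
      2 * (∫ t in (0:ℝ)..(1/2), α (2 * δ * Real.sin (2 * Real.pi * t)) * Real.sin (2 * Real.pi * t))
        ≤ b1 h δ x) ∧
    (∀ x : ℝ, x ≤ xstar - δ →
      b1 h δ x ≤
        -(2 * ∫ t in (0:ℝ)..(1/2), α (2 * δ * Real.sin (2 * Real.pi * t)) * Real.sin (2 * Real.pi * t))) := by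
  have hc : Continuous h := hsmooth.continuous
  refine ⟨?_, fun x hx => aux_right h hc xstar hmin α hα_cont hα_mono hα0 hlb δ hδ x hx, ?_⟩
  · refine mul_pos (by norm_num) ?_
    apply intervalIntegral.intervalIntegral_pos_of_pos_on
    · apply ContinuousOn.intervalIntegrable_of_Icc (by norm_num)
      exact aux_integrable α hα_cont δ hδ
    · intro t ht
      have hpi := Real.pi_pos
      have hs : 0 < Real.sin (2 * Real.pi * t) := by
        apply Real.sin_pos_of_pos_of_lt_pi
        · have := ht.1
          positivity
        · nlinarith [ht.2]
      have hp : 0 < 2 * δ * Real.sin (2 * Real.pi * t) := by positivity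
      have h2 := hα_mono (Set.mem_Ici.2 le_rfl) (Set.mem_Ici.2 hp.le) hp
      rw [hα0] at h2
      exact mul_pos h2 hs
    · norm_num
  · intro x hx
    have hc' : Continuous (fun y => h (-y)) := by fun_prop
    have hr := aux_right (fun y => h (-y)) hc' (-xstar)
      (fun y hy => by
        rw [neg_neg]
        exact hmin (-y) (fun e => hy (by linarith)))
      α hα_cont hα_mono hα0
      (fun x₁ x₂ hx12 => by
        have := hlb (-x₁) (-x₂) (by nlinarith)
        rwa [show -x₂ - -x₁ = -(x₂ - x₁) by ring, abs_neg] at this)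
      δ hδ (-x) (by linarith)
    have he : b1 (fun y => h (-y)) δ (-x) = - b1 h δ x := by
      rw [aux_b1_eq _ hc', aux_b1_eq _ hc, ← mul_neg, ← intervalIntegral.integral_neg]
      congr 1
      apply intervalIntegral.integral_congr
      intro t _
      simp only
      rw [show -(-x + δ * Real.sin (2 * Real.pi * t)) = x - δ * Real.sin (2 * Real.pi * t) by ring,
        show -(-x - δ * Real.sin (2 * Real.pi * t)) = x + δ * Real.sin (2 * Real.pi * t) by ring]
      ring
    rw [he] at hr
    linarith
end

section
/- For every δ > 0 there exists a point x̂ in the open interval (x* − δ, x* + δ) with b₁δ(x̂) = 0; that is, the average system ẋₐ = −(γ/2)·b₁δ(xₐ) has an equilibrium inside (x* − δ, x* + δ). -/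
open Real MeasureTheory intervalIntegral Filter

lemma b1_pos_of_mono (h : ℝ → ℝ) (hc : Continuous h) (δ x : ℝ) (hδ : 0 < δ)
    (hm : StrictMonoOn h (Set.Icc (x - δ) (x + δ))) : 0 < b1 h δ x := by
  have hs : ∫ t in (0:ℝ)..1, Real.sin (2 * Real.pi * t) = 0 := by
    have hpi : (2 * Real.pi) ≠ 0 := by positivity
    rw [intervalIntegral.integral_comp_mul_left (fun t => Real.sin t) hpi]
    simp
  have key : ∫ t in (0:ℝ)..1, h (x + δ * Real.sin (2 * Real.pi * t)) * Real.sin (2 * Real.pi * t)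
      = ∫ t in (0:ℝ)..1, (h (x + δ * Real.sin (2 * Real.pi * t)) - h x)
          * Real.sin (2 * Real.pi * t) := by
    simp_rw [sub_mul]
    rw [intervalIntegral.integral_sub, intervalIntegral.integral_const_mul, hs]
    · simp
    · exact Continuous.intervalIntegrable (by fun_prop) _ _
    · exact Continuous.intervalIntegrable (by fun_prop) _ _
  unfold b1
  rw [key]
  have hx : x ∈ Set.Icc (x - δ) (x + δ) := ⟨by linarith, by linarith⟩
  refine mul_pos two_pos (intervalIntegral.integral_pos one_pos ?_ ?_ ⟨1/4, by norm_num, ?_⟩)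
  · exact Continuous.continuousOn (by fun_prop)
  · intro t _
    have h1 := Real.sin_le_one (2 * Real.pi * t)
    have h2 := Real.neg_one_le_sin (2 * Real.pi * t)
    generalize Real.sin (2 * Real.pi * t) = s at *
    have hy : x + δ * s ∈ Set.Icc (x - δ) (x + δ) := ⟨by nlinarith, by nlinarith⟩
    rcases le_total 0 s with h0 | h0
    · exact mul_nonneg (sub_nonneg.2 (hm.monotoneOn hx hy (by nlinarith))) h0
    · exact mul_nonneg_of_nonpos_of_nonpos
        (sub_nonpos.2 (hm.monotoneOn hy hx (by nlinarith))) h0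
  · have : 2 * Real.pi * (1/4) = Real.pi / 2 := by ring
    rw [this, Real.sin_pi_div_two]
    have := hm hx (b := x + δ * 1) ⟨by linarith, by linarith⟩ (by linarith)
    linarith

/-- existence of an equilibrium of the average system in `(x* - δ, x* + δ)`. -/
theorem b1_has_zero (h : ℝ → ℝ) (hsmooth : ContDiff ℝ (⊤ : ℕ∞) h)
    (xstar : ℝ) (hmin : ∀ x : ℝ, x ≠ xstar → h xstar < h x)
    (α : ℝ → ℝ) (hα_cont : ContinuousOn α (Set.Ici 0))
    (hα_mono : StrictMonoOn α (Set.Ici 0)) (hα0 : α 0 = 0)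
    (hα_top : Tendsto α atTop atTop)
    (hlb : ∀ x₁ x₂ : ℝ, (x₁ - xstar) * (x₂ - xstar) ≥ 0 → α |x₂ - x₁| ≤ |h x₂ - h x₁|)
    (δ : ℝ) (hδ : 0 < δ) :
    ∃ xhat ∈ Set.Ioo (xstar - δ) (xstar + δ), b1 h δ xhat = 0 := by
  have hc : Continuous h := hsmooth.continuous
  have hinj : ∀ x₁ x₂ : ℝ, (x₁ - xstar) * (x₂ - xstar) ≥ 0 → h x₁ = h x₂ → x₁ = x₂ := by
    intro x₁ x₂ hp he
    by_contra hne
    have h1 := hlb x₁ x₂ hp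
    have h3 : 0 < |x₂ - x₁| := abs_pos.2 (sub_ne_zero.2 (Ne.symm hne))
    have h2 := hα_mono (Set.mem_Ici.2 le_rfl) (Set.mem_Ici.2 h3.le) h3
    rw [he, sub_self, abs_zero] at h1
    linarith
  have hR : 0 < b1 h δ (xstar + δ) := by
    apply b1_pos_of_mono h hc δ _ hδ
    refine ContinuousOn.strictMonoOn_of_injOn_Icc (by linarith) ?_ hc.continuousOn ?_
    · rw [add_sub_cancel_right]
      exact (hmin _ (by linarith)).le
    · intro a ha b hb hab
      exact hinj a b (mul_nonneg (by linarith [ha.1]) (by linarith [hb.1])) hab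
  have hL : 0 < b1 (fun y => - h y) δ (xstar - δ) := by
    apply b1_pos_of_mono _ hc.neg δ _ hδ
    refine ContinuousOn.strictMonoOn_of_injOn_Icc (by linarith) ?_ hc.neg.continuousOn ?_
    · rw [sub_add_cancel]
      exact neg_le_neg (hmin _ (by linarith)).le
    · intro a ha b hb hab
      exact hinj a b (mul_nonneg_of_nonpos_of_nonpos (by linarith [ha.2]) (by linarith [hb.2]))
        (neg_injective hab)
  have hL' : b1 h δ (xstar - δ) < 0 := by
    have : b1 (fun y => - h y) δ (xstar - δ) = - b1 h δ (xstar - δ) := by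
      simp [b1]
    linarith
  have hb : Continuous (b1 h δ) := by
    unfold b1
    refine continuous_const.mul
      (intervalIntegral.continuous_parametric_intervalIntegral_of_continuous' ?_ _ _)
    simp only [Function.uncurry_def]
    fun_prop
  exact intermediate_value_Ioo (by linarith) hb.continuousOn ⟨hL', hR⟩
end

section
/- For every δ > 0 and γ > 0, the interval [x* − δ, x* + δ] is forward invariant for the average system: if xₐ is a solution of ẋₐ = −(γ/2)·b₁δ(xₐ) and |xₐ(t₀) − x*| ≤ δ for some t₀ ≥ 0, then |xₐ(t) − x*| ≤ δ for all t ≥ t₀. -/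
open Real MeasureTheory intervalIntegral Filter

lemma aux_int_sin : ∫ t in (0:ℝ)..1, Real.sin (2 * Real.pi * t) = 0 := by
  have := intervalIntegral.integral_comp_mul_left (a := 0) (b := 1) (c := 2 * Real.pi)
    (fun x => Real.sin x) (by positivity)
  rw [this]
  simp [integral_sin]

lemma aux_b1 (h : ℝ → ℝ) (hc : Continuous h) (δ x : ℝ) :
    b1 h δ x = 2 * ∫ t in (0:ℝ)..1,
      (h (x + δ * Real.sin (2 * Real.pi * t)) - h x) * Real.sin (2 * Real.pi * t) := by
  unfold b1
  congr 1
  simp_rw [sub_mul]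
  rw [intervalIntegral.integral_sub, intervalIntegral.integral_const_mul, aux_int_sin]
  · simp
  · exact Continuous.intervalIntegrable (by fun_prop) _ _
  · exact Continuous.intervalIntegrable (by fun_prop) _ _

lemma aux_b1_nonneg (h : ℝ → ℝ) (hc : Continuous h) (δ x : ℝ)
    (H : ∀ s : ℝ, |s| ≤ 1 → 0 ≤ (h (x + δ * s) - h x) * s) : 0 ≤ b1 h δ x := by
  rw [aux_b1 h hc]
  have : 0 ≤ ∫ t in (0:ℝ)..1,
      (h (x + δ * Real.sin (2 * Real.pi * t)) - h x) * Real.sin (2 * Real.pi * t) :=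
    intervalIntegral.integral_nonneg (by norm_num)
      (fun t _ => H _ (Real.abs_sin_le_one _))
  linarith

lemma aux_b1_nonpos (h : ℝ → ℝ) (hc : Continuous h) (δ x : ℝ)
    (H : ∀ s : ℝ, |s| ≤ 1 → (h (x + δ * s) - h x) * s ≤ 0) : b1 h δ x ≤ 0 := by
  have h1 := aux_b1_nonneg (fun y => - h y) (by fun_prop) δ x
    (fun s hs => by have := H s hs; nlinarith)
  have h2 : b1 (fun y => - h y) δ x = - b1 h δ x := by
    unfold b1
    simp
  linarith

lemma aux_barrier (f f' : ℝ → ℝ) (c t₀ : ℝ)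
    (hf : ∀ t, t₀ ≤ t → HasDerivAt f (f' t) t) (h0 : f t₀ ≤ c)
    (hn : ∀ t, t₀ ≤ t → c ≤ f t → f' t ≤ 0) : ∀ t, t₀ ≤ t → f t ≤ c := by
  intro t ht
  have key : ∀ ε : ℝ, 0 < ε → f t ≤ c + ε * (t - t₀) := by
    intro ε hε
    refine image_le_of_deriv_right_lt_deriv_boundary (f := f) (f' := f') (a := t₀) (b := t)
      (B := fun s => c + ε * (s - t₀)) (B' := fun _ => ε)
      (fun s hs => (hf s hs.1).continuousAt.continuousWithinAt)
      (fun s hs => (hf s hs.1).hasDerivWithinAt) (by simpa using h0) ?_ ?_ ⟨ht, le_rfl⟩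
    · intro s
      simpa using (((hasDerivAt_id s).sub_const t₀).const_mul ε).const_add c
    · intro s hs he
      have : 0 ≤ ε * (s - t₀) := mul_nonneg hε.le (sub_nonneg.2 hs.1)
      have h3 := hn s hs.1 (by rw [he]; linarith)
      linarith
  refine le_of_forall_pos_le_add fun e he => ?_
  have h1 : 0 < t - t₀ + 1 := by linarith
  have h2 := key (e / (t - t₀ + 1)) (by positivity)
  have h3 : e / (t - t₀ + 1) * (t - t₀) ≤ e := by
    rw [div_mul_eq_mul_div, div_le_iff₀ h1]
    nlinarith
  linarith

/-- forward invariance of `[x* - δ, x* + δ]` for the average system. -/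
theorem average_forward_invariance (h : ℝ → ℝ) (hsmooth : ContDiff ℝ (⊤ : ℕ∞) h)
    (xstar : ℝ) (hmin : ∀ x : ℝ, x ≠ xstar → h xstar < h x)
    (α : ℝ → ℝ) (hα_cont : ContinuousOn α (Set.Ici 0))
    (hα_mono : StrictMonoOn α (Set.Ici 0)) (hα0 : α 0 = 0)
    (hα_top : Tendsto α atTop atTop)
    (hlb : ∀ x₁ x₂ : ℝ, (x₁ - xstar) * (x₂ - xstar) ≥ 0 → α |x₂ - x₁| ≤ |h x₂ - h x₁|)
    (δ γ : ℝ) (hδ : 0 < δ) (hγ : 0 < γ)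
    (xa : ℝ → ℝ) (hdiff : Differentiable ℝ xa)
    (hsol : ∀ t : ℝ, 0 ≤ t → HasDerivAt xa (-(γ / 2) * b1 h δ (xa t)) t)
    (t₀ : ℝ) (ht₀ : 0 ≤ t₀) (hinit : |xa t₀ - xstar| ≤ δ) :
    ∀ t : ℝ, t₀ ≤ t → |xa t - xstar| ≤ δ := by
  have hc : Continuous h := hsmooth.continuous
  have hmin' : ∀ x, h xstar ≤ h x := fun x => by
    by_cases hx : x = xstar
    · rw [hx]
    · exact (hmin x hx).le
  have hinj : ∀ x₁ x₂ : ℝ, (x₁ - xstar) * (x₂ - xstar) ≥ 0 → h x₁ = h x₂ → x₁ = x₂ := by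
    intro x₁ x₂ hx he
    by_contra hne
    have h1 := hlb x₁ x₂ hx
    have h2 : 0 < |x₂ - x₁| := abs_pos.2 (sub_ne_zero.2 (Ne.symm hne))
    have h3 := hα_mono (Set.mem_Ici.2 le_rfl) (Set.mem_Ici.2 h2.le) h2
    rw [he] at h1
    simp at h1
    linarith
  have hup : ∀ a b, xstar ≤ a → a ≤ b → h a ≤ h b := by
    intro a b ha hab
    refine (ContinuousOn.strictMonoOn_of_injOn_Icc (a := xstar) (b := b) (f := h)
      (ha.trans hab) (hmin' b) hc.continuousOn ?_).monotoneOn ⟨ha, hab⟩ ⟨ha.trans hab, le_rfl⟩ hab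
    intro x hx y hy hxy
    exact hinj x y (mul_nonneg (sub_nonneg.2 hx.1) (sub_nonneg.2 hy.1)) hxy
  have hdn : ∀ a b, b ≤ xstar → a ≤ b → h b ≤ h a := by
    intro a b hb hab
    refine (ContinuousOn.strictAntiOn_of_injOn_Icc (a := a) (b := xstar) (f := h)
      (hab.trans hb) (hmin' a) hc.continuousOn ?_).antitoneOn ⟨le_rfl, hab.trans hb⟩ ⟨hab, hb⟩ hab
    intro x hx y hy hxy
    exact hinj x y (mul_nonneg_of_nonpos_of_nonpos (sub_nonpos.2 hx.2) (sub_nonpos.2 hy.2)) hxy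
  have hi := abs_le.1 hinit
  intro t ht
  have hU := aux_barrier xa _ (xstar + δ) t₀ (fun s hs => hsol s (ht₀.trans hs)) (by linarith)
    (by
      intro s _ hx
      have : 0 ≤ b1 h δ (xa s) := by
        refine aux_b1_nonneg h hc δ _ fun u hu => ?_
        obtain ⟨hu1, hu2⟩ := abs_le.1 hu
        rcases le_total 0 u with h0 | h0
        · exact mul_nonneg (sub_nonneg.2 (hup _ _ (by linarith) (by nlinarith))) h0
        · exact mul_nonneg_of_nonpos_of_nonpos
            (sub_nonpos.2 (hup _ _ (by nlinarith) (by nlinarith))) h0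
      nlinarith) t ht
  have hL := aux_barrier (fun s => - xa s) _ (-(xstar - δ)) t₀
    (fun s hs => (hsol s (ht₀.trans hs)).neg) (by linarith)
    (by
      intro s _ hx
      have : b1 h δ (xa s) ≤ 0 := by
        refine aux_b1_nonpos h hc δ _ fun u hu => ?_
        obtain ⟨hu1, hu2⟩ := abs_le.1 hu
        rcases le_total 0 u with h0 | h0
        · exact mul_nonpos_of_nonpos_of_nonneg
            (sub_nonpos.2 (hdn _ _ (by nlinarith) (by nlinarith))) h0
        · exact mul_nonpos_of_nonneg_of_nonpos
            (sub_nonneg.2 (hdn _ _ (by linarith) (by nlinarith))) h0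
      nlinarith) t ht
  rw [abs_le]
  constructor <;> linarith
end

section
/- (Lemma 1(a), concrete form) For every δ > 0 and γ > 0, every solution xₐ of the average system ẋₐ = −(γ/2)·b₁δ(xₐ) defined on [0,∞) is bounded, and there exists T ≥ 0 such that |xₐ(t) − x*| ≤ δ for all t ≥ T; i.e. all trajectories of the average system enter and remain in the interval [x* − δ, x* + δ]. -/
open Real MeasureTheory intervalIntegral Filter

lemma aux_mono (h : ℝ → ℝ) (hc : Continuous h) (xstar : ℝ)
    (hmin : ∀ x : ℝ, x ≠ xstar → h xstar < h x)
    (hinj : ∀ x₁ x₂ : ℝ, (x₁ - xstar) * (x₂ - xstar) ≥ 0 → h x₁ = h x₂ → x₁ = x₂)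
    (x y : ℝ) (hx : xstar ≤ x) (hxy : x ≤ y) : h x ≤ h y := by
  by_contra hcon
  push Not at hcon
  have hm : h xstar ≤ h y := by
    rcases eq_or_ne y xstar with e | e
    · rw [e]
    · exact (hmin y e).le
  obtain ⟨z, hz, hzy⟩ := intermediate_value_Icc hx hc.continuousOn ⟨hm, hcon.le⟩
  have hz' := hinj z y (mul_nonneg (by linarith [hz.1]) (by linarith)) hzy
  have : x = y := le_antisymm hxy (by rw [← hz']; exact hz.2)
  rw [this] at hcon
  exact lt_irrefl _ hcon

lemma aux_anti (h : ℝ → ℝ) (hc : Continuous h) (xstar : ℝ)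
    (hmin : ∀ x : ℝ, x ≠ xstar → h xstar < h x)
    (hinj : ∀ x₁ x₂ : ℝ, (x₁ - xstar) * (x₂ - xstar) ≥ 0 → h x₁ = h x₂ → x₁ = x₂)
    (x y : ℝ) (hx : x ≤ xstar) (hxy : y ≤ x) : h x ≤ h y := by
  have := aux_mono (fun z => h (-z)) (hc.comp continuous_neg) (-xstar)
    (fun z hz => by simpa using hmin (-z) (fun e => hz (by linarith)))
    (fun a b hab e => by
      have := hinj (-a) (-b) (by nlinarith) e
      linarith) (-x) (-y) (by linarith) (by linarith)
  simpa using this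

lemma aux_int (h : ℝ → ℝ) (hc : Continuous h) (δ x ε : ℝ) (F : ℝ → ℝ) (hF : Continuous F)
    (H : ∀ s : ℝ, |s| ≤ 1 → F s ≤ ε * ((h (x + δ * s) - h x) * (δ * s))) :
    2 * ∫ t in (0:ℝ)..1, F (Real.sin (2 * Real.pi * t)) ≤ ε * δ * b1 h δ x := by
  have hs : ∫ t in (0:ℝ)..1, Real.sin (2 * Real.pi * t) = 0 := by
    rw [intervalIntegral.integral_comp_mul_left (fun u => Real.sin u) (by positivity)]
    simp
  have e : ∫ t in (0:ℝ)..1, ε * ((h (x + δ * Real.sin (2 * Real.pi * t)) - h x) *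
      (δ * Real.sin (2 * Real.pi * t))) = ε * δ *
      ∫ t in (0:ℝ)..1, h (x + δ * Real.sin (2 * Real.pi * t)) * Real.sin (2 * Real.pi * t) := by
    have : ∀ t : ℝ, ε * ((h (x + δ * Real.sin (2 * Real.pi * t)) - h x) *
      (δ * Real.sin (2 * Real.pi * t))) = ε * δ * (h (x + δ * Real.sin (2 * Real.pi * t)) *
        Real.sin (2 * Real.pi * t)) - ε * δ * h x * Real.sin (2 * Real.pi * t) := by
      intro t; ring
    simp only [this]
    rw [intervalIntegral.integral_sub, intervalIntegral.integral_const_mul,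
      intervalIntegral.integral_const_mul, hs]
    · ring
    · exact Continuous.intervalIntegrable (by fun_prop) _ _
    · exact Continuous.intervalIntegrable (by fun_prop) _ _
  have le : ∫ t in (0:ℝ)..1, F (Real.sin (2 * Real.pi * t)) ≤
      ∫ t in (0:ℝ)..1, ε * ((h (x + δ * Real.sin (2 * Real.pi * t)) - h x) *
      (δ * Real.sin (2 * Real.pi * t))) := by
    apply intervalIntegral.integral_mono_on (by norm_num)
    · exact Continuous.intervalIntegrable (by fun_prop) _ _
    · exact Continuous.intervalIntegrable (by fun_prop) _ _
    · intro t _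
      exact H _ (Real.abs_sin_le_one _)
  rw [e] at le
  unfold b1
  linarith

lemma aux_inv (V V' : ℝ → ℝ) (hV : ∀ t, 0 ≤ t → HasDerivAt V (V' t) t) (K : ℝ)
    (hneg : ∀ t, 0 ≤ t → K ≤ V t → V' t < 0) (a : ℝ) (ha : 0 ≤ a) (M : ℝ) (hM : K ≤ M)
    (hVa : V a ≤ M) (t : ℝ) (ht : a ≤ t) : V t ≤ M := by
  refine image_le_of_deriv_right_lt_deriv_boundary' (f := V) (f' := V') (a := a) (b := t)
    (B := fun _ => M) (B' := fun _ => 0) ?_ ?_ hVa continuousOn_const ?_ ?_ ⟨ht, le_rfl⟩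
  · exact fun s hs => (hV s (ha.trans hs.1)).continuousAt.continuousWithinAt
  · exact fun s hs => (hV s (ha.trans hs.1)).hasDerivWithinAt
  · exact fun s _ => hasDerivWithinAt_const _ _ _
  · intro s hs e
    exact hneg s (ha.trans hs.1) (by rw [e]; exact hM)

/-- Lemma 1(a), concrete form: every trajectory of the average system is
bounded, and enters and remains in `[x* - δ, x* + δ]`. -/
theorem average_global_attractivity (h : ℝ → ℝ) (hsmooth : ContDiff ℝ (⊤ : ℕ∞) h)
    (xstar : ℝ) (hmin : ∀ x : ℝ, x ≠ xstar → h xstar < h x)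
    (α : ℝ → ℝ) (hα_cont : ContinuousOn α (Set.Ici 0))
    (hα_mono : StrictMonoOn α (Set.Ici 0)) (hα0 : α 0 = 0)
    (hα_top : Tendsto α atTop atTop)
    (hlb : ∀ x₁ x₂ : ℝ, (x₁ - xstar) * (x₂ - xstar) ≥ 0 → α |x₂ - x₁| ≤ |h x₂ - h x₁|)
    (δ γ : ℝ) (hδ : 0 < δ) (hγ : 0 < γ)
    (xa : ℝ → ℝ) (hdiff : Differentiable ℝ xa)
    (hsol : ∀ t : ℝ, 0 ≤ t → HasDerivAt xa (-(γ / 2) * b1 h δ (xa t)) t) :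
    (∃ M : ℝ, ∀ t : ℝ, 0 ≤ t → |xa t| ≤ M) ∧
    (∃ T : ℝ, 0 ≤ T ∧ ∀ t : ℝ, T ≤ t → |xa t - xstar| ≤ δ) := by
  have hc : Continuous h := hsmooth.continuous
  have hpos : ∀ s, 0 < s → 0 < α s := fun s hs => by
    rw [← hα0]; exact hα_mono (by simp) (by simpa using hs.le) hs
  have hnn : ∀ s, 0 ≤ s → 0 ≤ α s := fun s hs => by
    rcases hs.eq_or_lt with e | e
    · rw [← e, hα0]
    · exact (hpos s e).le
  have hinj : ∀ x₁ x₂ : ℝ, (x₁ - xstar) * (x₂ - xstar) ≥ 0 → h x₁ = h x₂ → x₁ = x₂ := by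
    intro x₁ x₂ h12 e
    by_contra hne
    have h1 := hlb x₁ x₂ h12
    have h2 := hpos |x₂ - x₁| (abs_pos.2 (sub_ne_zero.2 (Ne.symm hne)))
    rw [e] at h1
    simp at h1
    linarith
  have hmono := aux_mono h hc xstar hmin hinj
  have hanti := aux_anti h hc xstar hmin hinj
  set F : ℝ → ℝ := fun s => α |δ * s| * |δ * s| with hFdef
  have hF : Continuous F := by
    have : Continuous fun s : ℝ => α |δ * s| :=
      hα_cont.comp_continuous (by fun_prop) (fun s => Set.mem_Ici.2 (abs_nonneg _))
    exact this.mul (by fun_prop)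
  set c := 2 * ∫ t in (0:ℝ)..1, F (Real.sin (2 * Real.pi * t)) with hcdef
  have hcpos : 0 < c := by
    apply mul_pos two_pos
    apply intervalIntegral.integral_pos (by norm_num)
    · exact Continuous.continuousOn (by fun_prop)
    · intro t _
      exact mul_nonneg (hnn _ (abs_nonneg _)) (abs_nonneg _)
    · refine ⟨1/4, ⟨by norm_num, by norm_num⟩, ?_⟩
      have : Real.sin (2 * Real.pi * (1/4)) = 1 := by
        rw [show 2 * Real.pi * (1/4) = Real.pi / 2 by ring, Real.sin_pi_div_two]
      rw [this]
      have hd : 0 < |δ * 1| := by simpa using hδ.ne'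
      exact mul_pos (hpos _ hd) hd
  have key : ∀ x, δ ≤ |x - xstar| → c ≤ (x - xstar) * b1 h δ x := by
    intro x hx
    rcases le_abs'.1 hx with hx | hx
    · have := aux_int h hc δ x (-1) F hF (by
        intro s hs
        obtain ⟨s1, s2⟩ := abs_le.1 hs
        have hy : x + δ * s ≤ xstar := by nlinarith
        have h1 := hlb x (x + δ * s) (by nlinarith)
        rw [add_sub_cancel_left] at h1
        refine (mul_le_mul_of_nonneg_right h1 (abs_nonneg _)).trans (le_of_eq ?_)
        rw [← abs_mul, neg_one_mul, abs_of_nonpos]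
        rcases le_total 0 (δ * s) with h0 | h0
        · exact mul_nonpos_of_nonpos_of_nonneg
            (by linarith [hanti (x + δ * s) x hy (by linarith)]) h0
        · exact mul_nonpos_of_nonneg_of_nonpos
            (by linarith [hanti x (x + δ * s) (by linarith) (by linarith)]) h0)
      nlinarith
    · have := aux_int h hc δ x 1 F hF (by
        intro s hs
        obtain ⟨s1, s2⟩ := abs_le.1 hs
        have hy : xstar ≤ x + δ * s := by nlinarith
        have h1 := hlb x (x + δ * s) (mul_nonneg (by linarith) (by linarith))
        rw [add_sub_cancel_left] at h1
        refine (mul_le_mul_of_nonneg_right h1 (abs_nonneg _)).trans (le_of_eq ?_)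
        rw [← abs_mul, one_mul, abs_of_nonneg]
        rcases le_total 0 (δ * s) with h0 | h0
        · exact mul_nonneg
            (by linarith [hmono x (x + δ * s) (by linarith) (by linarith)]) h0
        · exact mul_nonneg_of_nonpos_of_nonpos
            (by linarith [hmono (x + δ * s) x hy (by linarith)]) h0)
      nlinarith
  set V : ℝ → ℝ := fun t => (xa t - xstar) ^ 2 with hVdef
  set V' : ℝ → ℝ := fun t => -γ * ((xa t - xstar) * b1 h δ (xa t)) with hV'def
  have hV : ∀ t, 0 ≤ t → HasDerivAt V (V' t) t := by
    intro t ht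
    have := ((hsol t ht).sub_const xstar).pow 2
    refine this.congr_deriv ?_
    change _ = -γ * ((xa t - xstar) * b1 h δ (xa t))
    push_cast
    ring
  have hbd : ∀ t, 0 ≤ t → δ ^ 2 ≤ V t → V' t ≤ -(γ * c) := by
    intro t ht hVt
    have h1 : δ ≤ |xa t - xstar| := by
      have := sq_le_sq.1 hVt
      rwa [abs_of_pos hδ] at this
    have := mul_le_mul_of_nonneg_left (key _ h1) hγ.le
    simp only [hV'def]
    linarith
  have hneg : ∀ t, 0 ≤ t → δ ^ 2 ≤ V t → V' t < 0 := fun t ht hVt =>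
    (hbd t ht hVt).trans_lt (by have := mul_pos hγ hcpos; linarith)
  have hinv := aux_inv V V' hV (δ ^ 2) hneg
  constructor
  · set M := max (V 0) (δ ^ 2)
    refine ⟨|xstar| + Real.sqrt M, fun t ht => ?_⟩
    have h1 := hinv 0 le_rfl M (le_max_right _ _) (le_max_left _ _) t ht
    have h2 : |xa t - xstar| ≤ Real.sqrt M := Real.abs_le_sqrt h1
    have h3 := abs_add_le (xa t - xstar) xstar
    rw [sub_add_cancel] at h3
    linarith
  · obtain ⟨T, hT, hVT⟩ : ∃ T, 0 ≤ T ∧ V T ≤ δ ^ 2 := by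
      by_contra hcon
      push Not at hcon
      have hk : 0 < γ * c := mul_pos hγ hcpos
      have hdec : ∀ t, 0 ≤ t → V t ≤ V 0 - γ * c * t := by
        intro t ht
        have := image_le_of_deriv_right_le_deriv_boundary (f := V) (f' := V') (a := 0) (b := t)
          (B := fun t => V 0 - γ * c * t) (B' := fun _ => -(γ * c))
          (fun s hs => (hV s hs.1).continuousAt.continuousWithinAt)
          (fun s hs => (hV s hs.1).hasDerivWithinAt) (by simp)
          (Continuous.continuousOn (by fun_prop))
          (fun s _ => by
            have := (((hasDerivAt_id s).const_mul (γ * c)).const_sub (V 0)).hasDerivWithinAt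
              (s := Set.Ici s)
            simpa using this)
          (fun s hs => hbd s hs.1 (hcon s hs.1).le)
        exact this ⟨ht, le_rfl⟩
      have hV0 : 0 ≤ V 0 := sq_nonneg _
      have h1 := hdec (V 0 / (γ * c)) (by positivity)
      rw [mul_div_cancel₀ _ hk.ne'] at h1
      have h2 := hcon (V 0 / (γ * c)) (by positivity)
      nlinarith
    refine ⟨T, hT, fun t ht => ?_⟩
    have := hinv T hT (δ ^ 2) le_rfl hVT t ht
    exact abs_le_of_sq_le_sq this hδ.le
end

section
/- (Lemma 1(b)) There exists δ̄* > 0 such that for every δ ∈ (0, δ̄*] there exists a point x*ₐδ ∈ (x* − δ, x* + δ) with b₁δ(x*ₐδ) = 0 which is a locally exponentially stable equilibrium of the average system: for every γ > 0 there exist ρ > 0, c > 0 and λ > 0 such that every solution xₐ of ẋₐ = −(γ/2)·b₁δ(xₐ) with |xₐ(0) − x*ₐδ| ≤ ρ satisfies |xₐ(t) − x*ₐδ| ≤ c·e^{−λt}·|xₐ(0) − x*ₐδ| for all t ≥ 0. -/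
open Real MeasureTheory intervalIntegral Filter

lemma aux_exists_t (s : ℝ) (h1 : -1 ≤ s) (h2 : s ≤ 1) :
    ∃ t ∈ Set.Icc (0:ℝ) 1, Real.sin (2 * Real.pi * t) = s := by
  refine ⟨1/2 - Real.arcsin s / (2 * Real.pi), ?_, ?_⟩
  · have a := Real.arcsin_le_pi_div_two s
    have b := Real.neg_pi_div_two_le_arcsin s
    have hp := Real.pi_pos
    have e : Real.arcsin s = (Real.arcsin s / (2 * Real.pi)) * (2 * Real.pi) := by
      field_simp
    constructor
    · by_contra hc
      push Not at hc
      nlinarith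
    · by_contra hc
      push Not at hc
      nlinarith
  · have : 2 * Real.pi * (1/2 - Real.arcsin s / (2 * Real.pi)) = Real.pi - Real.arcsin s := by
      field_simp
    rw [this, Real.sin_pi_sub, Real.sin_arcsin h1 h2]

lemma aux_b1_hasDerivAt (h : ℝ → ℝ) (hd : Differentiable ℝ h) (hc : Continuous (deriv h))
    (δ x : ℝ) :
    HasDerivAt (b1 h δ)
      (2 * ∫ t in (0:ℝ)..1, deriv h (x + δ * Real.sin (2 * Real.pi * t)) *
        Real.sin (2 * Real.pi * t)) x := by
  have hcont : Continuous h := hd.continuous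
  obtain ⟨C, hC⟩ := (isCompact_Icc (a := x - 1 - |δ|) (b := x + 1 + |δ|)).exists_bound_of_continuousOn
    hc.continuousOn
  have key := intervalIntegral.hasDerivAt_integral_of_dominated_loc_of_deriv_le
    (μ := volume) (a := 0) (b := 1) (x₀ := x) (s := Metric.ball x 1)
    (F := fun x t => h (x + δ * Real.sin (2 * Real.pi * t)) * Real.sin (2 * Real.pi * t))
    (F' := fun x t => deriv h (x + δ * Real.sin (2 * Real.pi * t)) * Real.sin (2 * Real.pi * t))
    (bound := fun _ => C) (Metric.ball_mem_nhds x one_pos)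
    (Eventually.of_forall fun y => by
      apply Continuous.aestronglyMeasurable
      fun_prop)
    (by apply Continuous.intervalIntegrable; fun_prop)
    (by apply Continuous.aestronglyMeasurable; fun_prop)
    (by
      refine Eventually.of_forall fun t _ y hy => ?_
      have hs := Real.abs_sin_le_one (2 * Real.pi * t)
      have h1 : |δ * Real.sin (2 * Real.pi * t)| ≤ |δ| := by
        rw [abs_mul]
        exact mul_le_of_le_one_right (abs_nonneg _) hs
      rw [Metric.mem_ball, Real.dist_eq] at hy
      have hy' := abs_lt.1 hy
      have h2 := abs_le.1 h1
      have := hC (y + δ * Real.sin (2 * Real.pi * t)) ⟨by linarith, by linarith⟩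
      rw [norm_mul]
      calc _ ≤ ‖deriv h (y + δ * Real.sin (2 * Real.pi * t))‖ * 1 :=
            mul_le_mul_of_nonneg_left hs (norm_nonneg _)
        _ ≤ C := by linarith)
    (by simp)
    (by
      refine Eventually.of_forall fun t _ y _ => ?_
      have h1 : HasDerivAt (fun y => y + δ * Real.sin (2 * Real.pi * t)) 1 y :=
        (hasDerivAt_id y).add_const _
      have h2 := (hd (y + δ * Real.sin (2 * Real.pi * t))).hasDerivAt.comp y h1
      have h3 := h2.mul_const (Real.sin (2 * Real.pi * t))
      simpa using h3)
  exact key.2.const_mul 2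

lemma aux_b1_parts (h : ℝ → ℝ) (hd : Differentiable ℝ h) (hc : Continuous (deriv h))
    (δ x : ℝ) :
    b1 h δ x = 2 * ∫ t in (0:ℝ)..1, deriv h (x + δ * Real.sin (2 * Real.pi * t)) *
        (δ * Real.cos (2 * Real.pi * t) ^ 2) := by
  have hcont : Continuous h := hd.continuous
  have hp := Real.pi_pos
  have hF : ∀ t : ℝ, HasDerivAt (fun t => h (x + δ * Real.sin (2 * Real.pi * t)) *
      Real.cos (2 * Real.pi * t) / (2 * Real.pi))
      (deriv h (x + δ * Real.sin (2 * Real.pi * t)) * (δ * Real.cos (2 * Real.pi * t) ^ 2)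
        - h (x + δ * Real.sin (2 * Real.pi * t)) * Real.sin (2 * Real.pi * t)) t := by
    intro t
    have h0 : HasDerivAt (fun t : ℝ => 2 * Real.pi * t) (2 * Real.pi) t := by
      simpa using (hasDerivAt_id t).const_mul (2 * Real.pi)
    have h1 : HasDerivAt (fun t : ℝ => x + δ * Real.sin (2 * Real.pi * t)) _ t :=
      (h0.sin.const_mul δ).const_add x
    have h2 := (hd (x + δ * Real.sin (2 * Real.pi * t))).hasDerivAt.comp t h1
    have h3 := (h2.mul h0.cos).div_const (2 * Real.pi)
    refine h3.congr_deriv ?_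
    simp only [Function.comp]
    field_simp
    ring
  have hI := intervalIntegral.integral_eq_sub_of_hasDerivAt (a := 0) (b := 1)
    (fun t _ => hF t) (by apply Continuous.intervalIntegrable; fun_prop)
  rw [intervalIntegral.integral_sub (by apply Continuous.intervalIntegrable; fun_prop)
    (by apply Continuous.intervalIntegrable; fun_prop)] at hI
  simp at hI
  unfold b1
  linarith

lemma aux_stable (g : ℝ → ℝ) (p m : ℝ) (hm : 0 < m) (hg : HasDerivAt g m p) (hp : g p = 0)
    (γ : ℝ) (hγ : 0 < γ) : ∃ ρ c lam : ℝ, 0 < ρ ∧ 0 < c ∧ 0 < lam ∧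
          ∀ xa : ℝ → ℝ, Differentiable ℝ xa →
            (∀ t : ℝ, 0 ≤ t → HasDerivAt xa (-(γ / 2) * g (xa t)) t) →
            |xa 0 - p| ≤ ρ →
            ∀ t : ℝ, 0 ≤ t → |xa t - p| ≤ c * Real.exp (-lam * t) * |xa 0 - p| := by
  have hev := (hasDerivAt_iff_isLittleO.1 hg).def (half_pos hm)
  obtain ⟨r, hr, hr'⟩ := Metric.eventually_nhds_iff.1 hev
  have hb : ∀ x, |x - p| ≤ r / 2 → m / 2 * (x - p) ^ 2 ≤ (x - p) * g x := by
    intro x hx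
    have h1 := hr' (y := x) (by rw [Real.dist_eq]; linarith)
    rw [hp, Real.norm_eq_abs, Real.norm_eq_abs, smul_eq_mul, sub_zero] at h1
    have h2 : |(x - p) * (g x - (x - p) * m)| ≤ m / 2 * (x - p) ^ 2 := by
      rw [abs_mul, ← sq_abs (x - p)]
      nlinarith [abs_nonneg (x - p)]
    have h3 := (abs_le.1 h2).1
    nlinarith
  refine ⟨r / 2, 1, γ * m / 4, by positivity, one_pos, by positivity, ?_⟩
  intro xa hxa hode h0 t ht
  have hV : ∀ s, 0 ≤ s → HasDerivAt (fun s => (xa s - p) ^ 2)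
      (-γ * ((xa s - p) * g (xa s))) s := by
    intro s hs
    refine (((hode s hs).sub_const p).pow 2).congr_deriv ?_
    simp
    ring
  have hin : ∀ T, 0 ≤ T → (xa T - p) ^ 2 ≤ (r / 2) ^ 2 := by
    intro T hT
    refine image_le_of_deriv_right_lt_deriv_boundary (f := fun s => (xa s - p) ^ 2)
      (f' := fun s => -γ * ((xa s - p) * g (xa s))) (a := 0) (b := T)
      (B := fun _ => (r / 2) ^ 2) (B' := fun _ => 0)
      (fun s hs => (hV s hs.1).continuousAt.continuousWithinAt)
      (fun s hs => (hV s hs.1).hasDerivWithinAt)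
      (sq_le_sq' (by linarith [(abs_le.1 h0).1]) (abs_le.1 h0).2)
      (fun s => hasDerivAt_const _ _) ?_ ⟨hT, le_rfl⟩
    intro s hs hse
    have h1 := hb (xa s) (abs_le_of_sq_le_sq hse.le (by positivity))
    have hse' : (xa s - p) ^ 2 = (r / 2) ^ 2 := hse
    rw [hse'] at h1
    have : 0 < m / 2 * (r / 2) ^ 2 := by positivity
    have : 0 < γ * ((xa s - p) * g (xa s)) := mul_pos hγ (by linarith)
    show -γ * ((xa s - p) * g (xa s)) < 0
    linarith
  have hW : ∀ s, 0 ≤ s → HasDerivAt (fun s => (xa s - p) ^ 2 * Real.exp (γ * m / 2 * s))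
      ((-γ * ((xa s - p) * g (xa s))) * Real.exp (γ * m / 2 * s) +
        (xa s - p) ^ 2 * (Real.exp (γ * m / 2 * s) * (γ * m / 2))) s := by
    intro s hs
    have h1 : HasDerivAt (fun s => γ * m / 2 * s) (γ * m / 2) s := by
      simpa using (hasDerivAt_id s).const_mul (γ * m / 2)
    exact (hV s hs).mul h1.exp
  have hanti : AntitoneOn (fun s => (xa s - p) ^ 2 * Real.exp (γ * m / 2 * s)) (Set.Ici 0) := by
    refine antitoneOn_of_deriv_nonpos (convex_Ici 0)
      (fun s hs => (hW s hs).continuousAt.continuousWithinAt) ?_ ?_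
    · intro s hs
      rw [interior_Ici] at hs
      exact (hW s (le_of_lt hs)).differentiableAt.differentiableWithinAt
    · intro s hs
      rw [interior_Ici] at hs
      have hs0 : 0 ≤ s := le_of_lt hs
      rw [(hW s hs0).deriv]
      have h1 := hb (xa s) (abs_le_of_sq_le_sq (hin s hs0) (by positivity))
      have he := Real.exp_pos (γ * m / 2 * s)
      have h2 := mul_le_mul_of_nonneg_left h1 (mul_pos hγ he).le
      nlinarith
  have hfin := hanti (Set.mem_Ici.2 le_rfl) (Set.mem_Ici.2 ht) ht
  simp only [mul_zero, Real.exp_zero, mul_one] at hfin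
  rw [one_mul]
  have hx : (xa t - p) ^ 2 ≤ (Real.exp (-(γ * m / 4) * t) * |xa 0 - p|) ^ 2 := by
    rw [mul_pow, sq_abs, ← Real.exp_nat_mul]
    have e : ((2:ℕ):ℝ) * (-(γ * m / 4) * t) = -(γ * m / 2 * t) := by push_cast; ring
    rw [e, Real.exp_neg, inv_mul_eq_div, le_div_iff₀ (Real.exp_pos _)]
    exact hfin
  exact abs_le_of_sq_le_sq hx (by positivity)

/-- Lemma 1(b): for small `δ` the average system has a locally exponentially
stable equilibrium in `(x* - δ, x* + δ)`. -/
theorem average_loc_exp_stable_equilibrium (h : ℝ → ℝ) (hsmooth : ContDiff ℝ (⊤ : ℕ∞) h)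
    (xstar : ℝ) (hmin : ∀ x : ℝ, x ≠ xstar → h xstar < h x)
    (α : ℝ → ℝ) (hα_cont : ContinuousOn α (Set.Ici 0))
    (hα_mono : StrictMonoOn α (Set.Ici 0)) (hα0 : α 0 = 0)
    (hα_top : Tendsto α atTop atTop)
    (hlb : ∀ x₁ x₂ : ℝ, (x₁ - xstar) * (x₂ - xstar) ≥ 0 → α |x₂ - x₁| ≤ |h x₂ - h x₁|) :
    ∃ δstar : ℝ, 0 < δstar ∧ ∀ δ : ℝ, δ ∈ Set.Ioc 0 δstar →
      ∃ xad ∈ Set.Ioo (xstar - δ) (xstar + δ), b1 h δ xad = 0 ∧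
        ∀ γ : ℝ, 0 < γ → ∃ ρ c lam : ℝ, 0 < ρ ∧ 0 < c ∧ 0 < lam ∧
          ∀ xa : ℝ → ℝ, Differentiable ℝ xa →
            (∀ t : ℝ, 0 ≤ t → HasDerivAt xa (-(γ / 2) * b1 h δ (xa t)) t) →
            |xa 0 - xad| ≤ ρ →
            ∀ t : ℝ, 0 ≤ t → |xa t - xad| ≤ c * Real.exp (-lam * t) * |xa 0 - xad| := by
  have hd : Differentiable ℝ h := hsmooth.differentiable (by simp)
  have hc : Continuous (deriv h) := hsmooth.continuous_deriv (by simp)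
  have hinj : ∀ x₁ x₂ : ℝ, (x₁ - xstar) * (x₂ - xstar) ≥ 0 → h x₁ = h x₂ → x₁ = x₂ := by
    intro x₁ x₂ h1 h2
    by_contra hne
    have h3 := hlb x₁ x₂ h1
    rw [h2, sub_self, abs_zero] at h3
    have h4 := hα_mono (Set.mem_Ici.2 le_rfl) (Set.mem_Ici.2 (abs_nonneg (x₂ - x₁)))
      (abs_pos.2 (sub_ne_zero.2 (Ne.symm hne)))
    linarith
  have hle : ∀ x, h xstar ≤ h x := by
    intro x
    rcases eq_or_ne x xstar with e | e
    · rw [e]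
    · exact (hmin x e).le
  have hmonoI : ∀ b, xstar ≤ b → StrictMonoOn h (Set.Icc xstar b) := by
    intro b hb
    refine ContinuousOn.strictMonoOn_of_injOn_Icc hb (hle b) hd.continuous.continuousOn ?_
    intro u hu v hv e
    exact hinj u v (mul_nonneg (by linarith [hu.1]) (by linarith [hv.1])) e
  have hantiI : ∀ a, a ≤ xstar → StrictAntiOn h (Set.Icc a xstar) := by
    intro a ha
    refine ContinuousOn.strictAntiOn_of_injOn_Icc ha (hle a) hd.continuous.continuousOn ?_
    intro u hu v hv e
    exact hinj u v (mul_nonneg_of_nonpos_of_nonpos (by linarith [hu.2]) (by linarith [hv.2])) e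
  have hstat : deriv h xstar = 0 :=
    IsLocalMin.deriv_eq_zero (Eventually.of_forall hle)
  have hpos : ∀ y, xstar ≤ y → 0 ≤ deriv h y := by
    intro y hy
    rcases hy.eq_or_lt with e | e
    · rw [← e, hstat]
    · have hm := (hmonoI (y + 1) (by linarith)).monotoneOn
      have hn : Set.Icc xstar (y + 1) ∈ nhds y := Icc_mem_nhds e (by linarith)
      rw [← derivWithin_of_mem_nhds hn]
      exact hm.derivWithin_nonneg
  have hneg : ∀ y, y ≤ xstar → deriv h y ≤ 0 := by
    intro y hy
    rcases hy.eq_or_lt with e | e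
    · rw [e, hstat]
    · have hm := (hantiI (y - 1) (by linarith)).antitoneOn
      have hn : Set.Icc (y - 1) xstar ∈ nhds y := Icc_mem_nhds (by linarith) e
      rw [← derivWithin_of_mem_nhds hn]
      exact hm.derivWithin_nonpos
  have hexpos : ∀ b, xstar < b → ∃ y ∈ Set.Ioo xstar b, 0 < deriv h y := by
    intro b hb
    obtain ⟨y, hy, e⟩ := exists_deriv_eq_slope h hb hd.continuous.continuousOn
      hd.differentiableOn
    refine ⟨y, hy, ?_⟩
    rw [e]
    exact div_pos (sub_pos.2 (hmin b hb.ne')) (sub_pos.2 hb)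
  have hexneg : ∀ a, a < xstar → ∃ y ∈ Set.Ioo a xstar, deriv h y < 0 := by
    intro a ha
    obtain ⟨y, hy, e⟩ := exists_deriv_eq_slope h ha hd.continuous.continuousOn
      hd.differentiableOn
    refine ⟨y, hy, ?_⟩
    rw [e]
    exact div_neg_of_neg_of_pos (sub_neg.2 (hmin a ha.ne)) (sub_pos.2 ha)
  refine ⟨1, one_pos, fun δ hδ => ?_⟩
  have hδ0 : 0 < δ := hδ.1
  have hsin1 : ∀ t : ℝ, Real.sin (2 * Real.pi * t) ≤ 1 := fun t => Real.sin_le_one _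
  have hsin2 : ∀ t : ℝ, -1 ≤ Real.sin (2 * Real.pi * t) := fun t => Real.neg_one_le_sin _
  -- sin hits any prescribed point
  have hhit : ∀ x y, x - δ < y → y < x + δ → ∃ t ∈ Set.Icc (0:ℝ) 1,
      x + δ * Real.sin (2 * Real.pi * t) = y ∧ 0 < Real.cos (2 * Real.pi * t) ^ 2 := by
    intro x y h1 h2
    have b1' : -1 < (y - x) / δ := by rw [lt_div_iff₀ hδ0]; linarith
    have b2' : (y - x) / δ < 1 := by rw [div_lt_iff₀ hδ0]; linarith
    obtain ⟨t, ht, e⟩ := aux_exists_t ((y - x) / δ) b1'.le b2'.le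
    refine ⟨t, ht, ?_, ?_⟩
    · rw [e]; field_simp; ring
    · rw [Real.cos_sq', e]; nlinarith
  have hright : 0 < b1 h δ (xstar + δ) := by
    rw [aux_b1_parts h hd hc]
    refine mul_pos two_pos (intervalIntegral.integral_pos one_pos (by fun_prop) ?_ ?_)
    · intro t _
      exact mul_nonneg (hpos _ (by nlinarith [hsin2 t])) (by positivity)
    · obtain ⟨y, hy, hy'⟩ := hexpos (xstar + δ) (by linarith)
      obtain ⟨t, ht, e, hcs⟩ := hhit (xstar + δ) y (by linarith [hy.1]) (by linarith [hy.2])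
      exact ⟨t, ht, by rw [e]; positivity⟩
  have hleft : b1 h δ (xstar - δ) < 0 := by
    rw [aux_b1_parts h hd hc]
    have : 0 < ∫ t in (0:ℝ)..1, -(deriv h (xstar - δ + δ * Real.sin (2 * Real.pi * t)) *
        (δ * Real.cos (2 * Real.pi * t) ^ 2)) := by
      refine intervalIntegral.integral_pos one_pos (by fun_prop) ?_ ?_
      · intro t _
        rw [← neg_mul]
        exact mul_nonneg (neg_nonneg.2 (hneg _ (by nlinarith [hsin1 t]))) (by positivity)
      · obtain ⟨y, hy, hy'⟩ := hexneg (xstar - δ) (by linarith)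
        obtain ⟨t, ht, e, hcs⟩ := hhit (xstar - δ) y (by linarith [hy.1]) (by linarith [hy.2])
        exact ⟨t, ht, by rw [e, ← neg_mul]; exact mul_pos (neg_pos.2 hy') (by positivity)⟩
    rw [intervalIntegral.integral_neg] at this
    linarith
  have hbc : Continuous (b1 h δ) :=
    continuous_iff_continuousAt.2 fun x => (aux_b1_hasDerivAt h hd hc δ x).continuousAt
  obtain ⟨p, hpI, hp0⟩ := intermediate_value_Ioo (a := xstar - δ) (b := xstar + δ) (by linarith)
    hbc.continuousOn (show (0:ℝ) ∈ Set.Ioo _ _ from ⟨hleft, hright⟩)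
  refine ⟨p, hpI, hp0, fun γ hγ => aux_stable (b1 h δ) p _ ?_
    (aux_b1_hasDerivAt h hd hc δ p) hp0 γ hγ⟩
  -- positivity of the derivative
  have hparts := aux_b1_parts h hd hc δ p
  rw [hp0] at hparts
  obtain ⟨s0, hs0⟩ : ∃ s0, s0 = (xstar - p) / δ := ⟨_, rfl⟩
  have hs1 : -1 < s0 := by rw [hs0, lt_div_iff₀ hδ0]; linarith [hpI.2]
  have hs2 : s0 < 1 := by rw [hs0, div_lt_iff₀ hδ0]; linarith [hpI.1]
  have hxs : xstar = p + δ * s0 := by rw [hs0]; field_simp; ring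
  have hq : 0 < 1 - s0 ^ 2 := by nlinarith
  have hfac : ∀ t : ℝ, 0 < 1 + s0 * Real.sin (2 * Real.pi * t) := by
    intro t
    have k1 := hsin1 t
    have k2 := hsin2 t
    rcases le_total 0 (Real.sin (2 * Real.pi * t)) with k | k
    · nlinarith [mul_pos (show 0 < 1 + s0 by linarith) (show 0 < 1 + Real.sin (2 * Real.pi * t) by linarith),
        mul_nonneg (show 0 ≤ 1 - s0 by linarith) (show 0 ≤ 1 - Real.sin (2 * Real.pi * t) by linarith)]
    · nlinarith [mul_nonneg (show 0 ≤ 1 + s0 by linarith) (show 0 ≤ 1 + Real.sin (2 * Real.pi * t) by linarith),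
        mul_pos (show 0 < 1 - s0 by linarith) (show 0 < 1 - Real.sin (2 * Real.pi * t) by linarith)]
  have hmain : 0 < ∫ t in (0:ℝ)..1, deriv h (p + δ * Real.sin (2 * Real.pi * t)) *
      ((Real.sin (2 * Real.pi * t) - s0) * (1 + s0 * Real.sin (2 * Real.pi * t))) := by
    refine intervalIntegral.integral_pos one_pos (by fun_prop) ?_ ?_
    · intro t _
      rcases le_total s0 (Real.sin (2 * Real.pi * t)) with hle' | hle'
      · exact mul_nonneg (hpos _ (by nlinarith)) (mul_nonneg (by linarith) (hfac t).le)
      · exact mul_nonneg_of_nonpos_of_nonpos (hneg _ (by nlinarith))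
          (mul_nonpos_of_nonpos_of_nonneg (by linarith) (hfac t).le)
    · obtain ⟨y, hy, hy'⟩ := hexpos (p + δ) (by linarith [hpI.1])
      obtain ⟨t, ht, e, _⟩ := hhit p y (by linarith [hy.1, hpI.2]) hy.2
      refine ⟨t, ht, ?_⟩
      have hlt : s0 < Real.sin (2 * Real.pi * t) := by
        have := hy.1
        rw [← e] at this
        by_contra hcon
        push Not at hcon
        nlinarith
      rw [e]
      exact mul_pos hy' (mul_pos (by linarith) (hfac t))
  have hsplit : (∫ t in (0:ℝ)..1, deriv h (p + δ * Real.sin (2 * Real.pi * t)) *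
      ((Real.sin (2 * Real.pi * t) - s0) * (1 + s0 * Real.sin (2 * Real.pi * t)))) =
      (1 - s0 ^ 2) * (∫ t in (0:ℝ)..1, deriv h (p + δ * Real.sin (2 * Real.pi * t)) *
        Real.sin (2 * Real.pi * t)) - s0 / δ * ∫ t in (0:ℝ)..1,
        deriv h (p + δ * Real.sin (2 * Real.pi * t)) * (δ * Real.cos (2 * Real.pi * t) ^ 2) := by
    rw [← intervalIntegral.integral_const_mul, ← intervalIntegral.integral_const_mul,
      ← intervalIntegral.integral_sub (by apply Continuous.intervalIntegrable; fun_prop)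
        (by apply Continuous.intervalIntegrable; fun_prop)]
    refine intervalIntegral.integral_congr fun t _ => ?_
    simp only [Real.cos_sq']
    field_simp
    ring
  have hz : (∫ t in (0:ℝ)..1,
        deriv h (p + δ * Real.sin (2 * Real.pi * t)) * (δ * Real.cos (2 * Real.pi * t) ^ 2)) = 0 := by
    linarith
  rw [hsplit, hz, mul_zero, sub_zero] at hmain
  exact mul_pos two_pos (pos_of_mul_pos_right hmain hq.le)
end

section
/- If the function h̄(s) := h(x* + s) − h(x*) is even (h̄(−s) = h̄(s) for all s ∈ ℝ), then for every δ > 0 the point x* is an equilibrium of the average system, i.e. b₁δ(x*) = 0. -/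
open Real MeasureTheory intervalIntegral

/-- if `h̄(s) = h(x* + s) - h(x*)` is even, then `x*` is an equilibrium of the
average system. -/
theorem b1_eq_zero_of_even (h : ℝ → ℝ) (hc : Continuous h) (xstar : ℝ)
    (heven : ∀ s : ℝ, h (xstar + -s) - h xstar = h (xstar + s) - h xstar)
    (δ : ℝ) (hδ : 0 < δ) :
    b1 h δ xstar = 0 := by
  have key := intervalIntegral.integral_comp_sub_left (a := 0) (b := 1)
    (fun t : ℝ => h (xstar + δ * Real.sin (2 * Real.pi * t)) * Real.sin (2 * Real.pi * t)) 1
  have hneg : ∀ t : ℝ, h (xstar + δ * Real.sin (2 * Real.pi * (1 - t))) *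
      Real.sin (2 * Real.pi * (1 - t)) =
      -(h (xstar + δ * Real.sin (2 * Real.pi * t)) * Real.sin (2 * Real.pi * t)) := by
    intro t
    have h1 : Real.sin (2 * Real.pi * (1 - t)) = -Real.sin (2 * Real.pi * t) := by
      rw [mul_sub, mul_one, Real.sin_two_pi_sub]
    have h2 := heven (δ * Real.sin (2 * Real.pi * t))
    have h3 := sub_left_inj.mp h2
    rw [h1, mul_neg, mul_neg, h3]
  simp only [hneg, intervalIntegral.integral_neg, sub_self, sub_zero] at key
  unfold b1
  linarith
end

section
/- If the function h̄(s) := h(x* + s) − h(x*) is even, then for every δ > 0 one has (x − x*)·b₁δ(x) > 0 for all x ≠ x*; consequently x* is the unique equilibrium of the average system ẋₐ = −(γ/2)·b₁δ(xₐ), and every solution xₐ of the average system on [0,∞) converges to x* as t → ∞. -/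
open Real MeasureTheory intervalIntegral Filter

theorem aux_mono_s8 (h : ℝ → ℝ) (hc : Continuous h)
    (xstar : ℝ) (hmin : ∀ x : ℝ, x ≠ xstar → h xstar < h x)
    (α : ℝ → ℝ) (hα_mono : StrictMonoOn α (Set.Ici 0)) (hα0 : α 0 = 0)
    (hlb : ∀ x₁ x₂ : ℝ, (x₁ - xstar) * (x₂ - xstar) ≥ 0 → α |x₂ - x₁| ≤ |h x₂ - h x₁|)
    (heven : ∀ s : ℝ, h (xstar + -s) - h xstar = h (xstar + s) - h xstar)
    (u v : ℝ) (huv : |u| < |v|) : h (xstar + u) < h (xstar + v) := by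
  have habs : ∀ s, h (xstar + s) = h (xstar + |s|) := by
    intro s
    rcases abs_choice s with e | e
    · rw [e]
    · rw [e]; linarith [heven s]
  rw [habs u, habs v]
  have hu := abs_nonneg u
  have hv : 0 < |v| := lt_of_le_of_lt hu huv
  have hm : StrictMonoOn h (Set.Icc xstar (xstar + |v|)) := by
    apply ContinuousOn.strictMonoOn_of_injOn_Icc (by linarith)
    · exact (hmin _ (by linarith)).le
    · exact hc.continuousOn
    · intro a ha b hb hab
      by_contra hne
      have h1 := hlb a b (mul_nonneg (by linarith [ha.1]) (by linarith [hb.1]))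
      rw [hab, sub_self, abs_zero] at h1
      have hp : 0 < |b - a| := abs_pos.2 (sub_ne_zero.2 (Ne.symm hne))
      have h2 := hα_mono (Set.mem_Ici.2 le_rfl) (Set.mem_Ici.2 hp.le) hp
      rw [hα0] at h2
      linarith
  exact hm ⟨by linarith, by linarith⟩ ⟨by linarith, by linarith⟩ (by linarith)

theorem aux_sym (h : ℝ → ℝ) (hc : Continuous h) (δ x : ℝ) :
    b1 h δ x = ∫ t in (0:ℝ)..1, (h (x + δ * Real.sin (2 * Real.pi * t)) -
      h (x - δ * Real.sin (2 * Real.pi * t))) * Real.sin (2 * Real.pi * t) := by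
  have e := intervalIntegral.integral_comp_sub_left (a := 0) (b := 1)
    (fun t => h (x + δ * Real.sin (2 * Real.pi * t)) * Real.sin (2 * Real.pi * t)) 1
  have hs : ∀ t : ℝ, Real.sin (2 * Real.pi * (1 - t)) = - Real.sin (2 * Real.pi * t) := by
    intro t
    rw [← Real.sin_two_pi_sub]; ring_nf
  simp only [hs, sub_self, sub_zero] at e
  unfold b1
  rw [two_mul]
  nth_rewrite 2 [← e]
  rw [← intervalIntegral.integral_add]
  · apply intervalIntegral.integral_congr
    intro t _
    simp only [mul_neg, ← sub_eq_add_neg]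
    ring
  · exact Continuous.intervalIntegrable (by fun_prop) _ _
  · exact Continuous.intervalIntegrable (by fun_prop) _ _

theorem aux_cont (h : ℝ → ℝ) (hc : Continuous h) (δ : ℝ) : Continuous (b1 h δ) := by
  unfold b1
  apply continuous_const.mul
  apply intervalIntegral.continuous_parametric_intervalIntegral_of_continuous'
  fun_prop

theorem aux_pos (h : ℝ → ℝ) (hc : Continuous h) (xstar : ℝ)
    (hm : ∀ u v : ℝ, |u| < |v| → h (xstar + u) < h (xstar + v))
    (δ : ℝ) (hδ : 0 < δ) (x : ℝ) (hx : x ≠ xstar) : 0 < (x - xstar) * b1 h δ x := by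
  have key : ∀ s : ℝ, s ≠ 0 → 0 < (x - xstar) * ((h (x + δ * s) - h (x - δ * s)) * s) := by
    intro s hs
    have hcx : x - xstar ≠ 0 := sub_ne_zero.2 hx
    have e1 : x + δ * s = xstar + (x - xstar + δ * s) := by ring
    have e2 : x - δ * s = xstar + (x - xstar - δ * s) := by ring
    rcases lt_or_gt_of_ne (mul_ne_zero hcx hs) with hn | hp
    · have := hm (x - xstar + δ * s) (x - xstar - δ * s) (by
        rw [← sq_lt_sq]; nlinarith [mul_pos hδ (neg_pos.2 hn)])
      rw [← e1, ← e2] at this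
      nlinarith
    · have := hm (x - xstar - δ * s) (x - xstar + δ * s) (by
        rw [← sq_lt_sq]; nlinarith [mul_pos hδ hp])
      rw [← e1, ← e2] at this
      nlinarith
  rw [aux_sym h hc, ← intervalIntegral.integral_const_mul]
  apply intervalIntegral.integral_pos (by norm_num)
  · exact Continuous.continuousOn (by fun_prop)
  · intro t _
    by_cases hs : Real.sin (2 * Real.pi * t) = 0
    · simp [hs]
    · exact (key _ hs).le
  · refine ⟨1 / 4, by norm_num, key _ ?_⟩
    rw [show 2 * Real.pi * (1 / 4) = Real.pi / 2 by ring, Real.sin_pi_div_two]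
    norm_num

theorem aux_conv (b : ℝ → ℝ) (hb : Continuous b) (xstar : ℝ)
    (hpos : ∀ x, x ≠ xstar → 0 < (x - xstar) * b x) (γ : ℝ) (hγ : 0 < γ) (xa : ℝ → ℝ)
    (hd : ∀ t : ℝ, 0 ≤ t → HasDerivAt xa (-(γ / 2) * b (xa t)) t) :
    Tendsto xa atTop (nhds xstar) := by
  have hnn : ∀ x, 0 ≤ (x - xstar) * b x := by
    intro x
    by_cases hx : x = xstar
    · simp [hx]
    · exact (hpos x hx).le
  have hV : ∀ m t : ℝ, 0 ≤ t → HasDerivAt (fun t => (xa t - xstar) ^ 2 + γ * m * t)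
      (γ * (m - (xa t - xstar) * b (xa t))) t := by
    intro m t ht
    refine ((((hd t ht).sub_const xstar).pow 2).add
      ((hasDerivAt_id t).const_mul (γ * m))).congr_deriv ?_
    norm_num
    ring
  have hanti : ∀ m : ℝ, (∀ t, 0 ≤ t → m ≤ (xa t - xstar) * b (xa t)) →
      AntitoneOn (fun t => (xa t - xstar) ^ 2 + γ * m * t) (Set.Ici 0) := by
    intro m hm
    apply antitoneOn_of_deriv_nonpos (convex_Ici 0)
    · intro t ht
      exact (hV m t ht).continuousAt.continuousWithinAt
    · intro t ht
      rw [interior_Ici] at ht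
      exact (hV m t (le_of_lt ht)).differentiableAt.differentiableWithinAt
    · intro t ht
      rw [interior_Ici] at ht
      rw [(hV m t (le_of_lt ht)).deriv]
      exact mul_nonpos_of_nonneg_of_nonpos hγ.le (by linarith [hm t (le_of_lt ht)])
  have h0 : ∀ s t : ℝ, 0 ≤ s → s ≤ t → (xa t - xstar) ^ 2 ≤ (xa s - xstar) ^ 2 := by
    intro s t hs hst
    have := hanti 0 (fun t _ => hnn _) (Set.mem_Ici.2 hs) (Set.mem_Ici.2 (hs.trans hst)) hst
    simpa using this
  rw [Metric.tendsto_atTop]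
  intro ε hε
  suffices hT : ∃ T, 0 ≤ T ∧ (xa T - xstar) ^ 2 < ε ^ 2 by
    obtain ⟨T, hT0, hT⟩ := hT
    refine ⟨T, fun t ht => ?_⟩
    rw [Real.dist_eq]
    exact abs_lt_of_sq_lt_sq ((h0 T t hT0 ht).trans_lt hT) hε.le
  by_contra! hcon
  set R := |xa 0 - xstar| with hR
  let K : Set ℝ := Set.Icc (xstar - R) (xstar + R) ∩ {x | ε ^ 2 ≤ (x - xstar) ^ 2}
  have hK : IsCompact K := isCompact_Icc.inter_right
    (isClosed_le continuous_const (by fun_prop))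
  have hmem : ∀ t, 0 ≤ t → xa t ∈ K := by
    intro t ht
    refine ⟨?_, hcon t ht⟩
    have := abs_le.1 (sq_le_sq.1 (h0 0 t le_rfl ht))
    exact ⟨by linarith [this.1], by linarith [this.2]⟩
  obtain ⟨y, hyK, hy⟩ := hK.exists_isMinOn ⟨_, hmem 0 le_rfl⟩
    (f := fun x => (x - xstar) * b x) (Continuous.continuousOn (by fun_prop))
  have hyne : y ≠ xstar := by
    rintro rfl
    have := hyK.2
    simp only [Set.mem_ofPred_eq, sub_self] at this
    nlinarith [pow_pos hε 2]
  have hm := hpos y hyne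
  set m := (y - xstar) * b y with hmdef
  have hA := hanti m (fun t ht => hy (hmem t ht))
  have hgm : 0 < γ * m := mul_pos hγ hm
  set T := ((xa 0 - xstar) ^ 2) / (γ * m) with hTdef
  have hT : 0 ≤ T := by positivity
  have h2 := hA (Set.mem_Ici.2 le_rfl) (Set.mem_Ici.2 hT) hT
  have h3 : γ * m * T = (xa 0 - xstar) ^ 2 := by
    rw [hTdef]; field_simp
  simp only [h3, mul_zero] at h2
  have := hcon T hT
  nlinarith [pow_pos hε 2]

/-- if `h̄` is even, `x*` is the unique equilibrium of the average system and
every solution converges to it. -/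
theorem average_convergence_of_even (h : ℝ → ℝ) (hsmooth : ContDiff ℝ (⊤ : ℕ∞) h)
    (xstar : ℝ) (hmin : ∀ x : ℝ, x ≠ xstar → h xstar < h x)
    (α : ℝ → ℝ) (hα_cont : ContinuousOn α (Set.Ici 0))
    (hα_mono : StrictMonoOn α (Set.Ici 0)) (hα0 : α 0 = 0)
    (hα_top : Tendsto α atTop atTop)
    (hlb : ∀ x₁ x₂ : ℝ, (x₁ - xstar) * (x₂ - xstar) ≥ 0 → α |x₂ - x₁| ≤ |h x₂ - h x₁|)
    (heven : ∀ s : ℝ, h (xstar + -s) - h xstar = h (xstar + s) - h xstar)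
    (δ : ℝ) (hδ : 0 < δ) :
    (∀ x : ℝ, x ≠ xstar → 0 < (x - xstar) * b1 h δ x) ∧
    (∀ x : ℝ, b1 h δ x = 0 → x = xstar) ∧
    (∀ γ : ℝ, 0 < γ → ∀ xa : ℝ → ℝ, Differentiable ℝ xa →
      (∀ t : ℝ, 0 ≤ t → HasDerivAt xa (-(γ / 2) * b1 h δ (xa t)) t) →
      Tendsto xa atTop (nhds xstar)) := by
  have hc : Continuous h := hsmooth.continuous
  have hm := aux_mono_s8 h hc xstar hmin α hα_mono hα0 hlb heven
  have hpos := aux_pos h hc xstar hm δ hδ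
  refine ⟨hpos, ?_, ?_⟩
  · intro x hx
    by_contra hne
    have := hpos x hne
    rw [hx, mul_zero] at this
    exact lt_irrefl _ this
  · intro γ hγ xa _ hd
    exact aux_conv _ (aux_cont h hc δ) xstar hpos γ hγ xa hd
end

section
/- If h is Lipschitz with constant L on the interval [x − δ, x + δ], then |b₁δ(x)| ≤ L·δ. In particular, the averaged drift of the extremum-seeking scheme at x is bounded by a quantity depending only on the local Lipschitz constant of h and on the dither amplitude δ, not on the magnitude of h itself. -/
open Real MeasureTheory intervalIntegral

/-- the averaged drift is bounded by the local Lipschitz constant times `δ`. -/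
theorem b1_le_lipschitz_bound (h : ℝ → ℝ) (hc : Continuous h)
    (δ L x : ℝ) (hδ : 0 < δ) (hL : 0 ≤ L)
    (hLip : ∀ u ∈ Set.Icc (x - δ) (x + δ), ∀ v ∈ Set.Icc (x - δ) (x + δ),
      |h u - h v| ≤ L * |u - v|) :
    |b1 h δ x| ≤ L * δ := by
  have hpi : (2 * Real.pi) ≠ 0 := by positivity
  have h1 : ∫ t in (0:ℝ)..1, Real.sin (2 * Real.pi * t) = 0 := by
    rw [intervalIntegral.integral_comp_mul_left (fun t => Real.sin t) hpi]
    simp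
  have h2 : ∫ t in (0:ℝ)..1, Real.sin (2 * Real.pi * t) ^ 2 = 1 / 2 := by
    rw [intervalIntegral.integral_comp_mul_left (fun t => Real.sin t ^ 2) hpi]
    rw [integral_sin_sq]
    simp
    field_simp
  have h3 : ∫ t in (0:ℝ)..1, h (x + δ * Real.sin (2 * Real.pi * t)) * Real.sin (2 * Real.pi * t)
      = ∫ t in (0:ℝ)..1, (h (x + δ * Real.sin (2 * Real.pi * t)) - h x)
        * Real.sin (2 * Real.pi * t) := by
    simp only [sub_mul]
    rw [intervalIntegral.integral_sub, intervalIntegral.integral_const_mul, h1]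
    · simp
    · exact Continuous.intervalIntegrable (by fun_prop) _ _
    · exact Continuous.intervalIntegrable (by fun_prop) _ _
  have h4 : |∫ t in (0:ℝ)..1, (h (x + δ * Real.sin (2 * Real.pi * t)) - h x)
        * Real.sin (2 * Real.pi * t)| ≤
      ∫ t in (0:ℝ)..1, (L * δ) * Real.sin (2 * Real.pi * t) ^ 2 := by
    refine (intervalIntegral.abs_integral_le_integral_abs zero_le_one).trans ?_
    apply intervalIntegral.integral_mono_on zero_le_one
    · exact Continuous.intervalIntegrable (by fun_prop) _ _
    · exact Continuous.intervalIntegrable (by fun_prop) _ _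
    · intro t _
      generalize hs : Real.sin (2 * Real.pi * t) = s
      have hs1 : s ≤ 1 := hs ▸ Real.sin_le_one _
      have hs2 : -1 ≤ s := hs ▸ Real.neg_one_le_sin _
      have hb := hLip (x + δ * s) ⟨by nlinarith, by nlinarith⟩ x ⟨by linarith, by linarith⟩
      rw [add_sub_cancel_left, abs_mul, abs_of_pos hδ] at hb
      rw [abs_mul, ← sq_abs s]
      nlinarith [mul_le_mul_of_nonneg_right hb (abs_nonneg s)]
  rw [intervalIntegral.integral_const_mul, h2] at h4
  unfold b1
  rw [h3, abs_mul, abs_two]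
  linarith
end

section
/- If α is a class-K∞ function, then the function δ̄*(s) := 2∫₀^{1/2} α(s·sin(2πt)) dt is itself a class-K∞ function: δ̄*(0) = 0, δ̄* is continuous and strictly increasing on [0,∞), and δ̄*(s) → ∞ as s → ∞. -/
open Real MeasureTheory intervalIntegral Filter

/-- `δ̄*(s) := 2∫₀^{1/2} α(s sin(2πt)) dt` is a class-K∞ function. -/
theorem deltastar_classKinfty (α : ℝ → ℝ)
    (hα_cont : ContinuousOn α (Set.Ici 0))
    (hα_mono : StrictMonoOn α (Set.Ici 0)) (hα0 : α 0 = 0)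
    (hα_top : Tendsto α atTop atTop) :
    (2 * ∫ t in (0:ℝ)..(1/2), α ((0:ℝ) * Real.sin (2 * Real.pi * t)) = 0) ∧
    ContinuousOn (fun s : ℝ => 2 * ∫ t in (0:ℝ)..(1/2), α (s * Real.sin (2 * Real.pi * t)))
      (Set.Ici 0) ∧
    StrictMonoOn (fun s : ℝ => 2 * ∫ t in (0:ℝ)..(1/2), α (s * Real.sin (2 * Real.pi * t)))
      (Set.Ici 0) ∧
    Tendsto (fun s : ℝ => 2 * ∫ t in (0:ℝ)..(1/2), α (s * Real.sin (2 * Real.pi * t)))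
      atTop atTop := by
  have hβc : Continuous (fun x : ℝ => α (max x 0)) :=
    hα_cont.comp_continuous (by fun_prop) (fun x => le_max_right x 0)
  have hsin : ∀ t ∈ Set.Icc (0:ℝ) (1/2), 0 ≤ Real.sin (2 * Real.pi * t) := by
    intro t ht
    apply Real.sin_nonneg_of_nonneg_of_le_pi
    · have := Real.pi_pos
      have := ht.1
      positivity
    · nlinarith [Real.pi_pos, ht.2]
  have hpos : ∀ x, 0 ≤ x → 0 ≤ α x := by
    intro x hx
    have := hα_mono.monotoneOn (Set.mem_Ici.2 le_rfl) (Set.mem_Ici.2 hx) hx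
    rwa [hα0] at this
  have hco : ∀ s : ℝ, 0 ≤ s →
      ContinuousOn (fun t => α (s * Real.sin (2 * Real.pi * t))) (Set.Icc (0:ℝ) (1/2)) := by
    intro s hs
    refine hα_cont.comp (by fun_prop) ?_
    intro t ht
    exact mul_nonneg hs (hsin t ht)
  refine ⟨by simp [hα0], ?_, ?_, ?_⟩
  · have hF : Continuous (fun s : ℝ => ∫ t in (0:ℝ)..(1/2),
        α (max (s * Real.sin (2 * Real.pi * t)) 0)) := by
      apply intervalIntegral.continuous_parametric_intervalIntegral_of_continuous'
      exact hβc.comp (g := fun x : ℝ => α (max x 0))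
        (f := fun p : ℝ × ℝ => p.1 * Real.sin (2 * Real.pi * p.2)) (by fun_prop)
    refine (hF.const_mul 2).continuousOn.congr ?_
    intro s hs
    dsimp only
    congr 1
    apply intervalIntegral.integral_congr
    intro t ht
    rw [Set.uIcc_of_le (by norm_num)] at ht
    dsimp only
    rw [max_eq_left (mul_nonneg hs (hsin t ht))]
  · intro a ha b hb hab
    have ha' : (0:ℝ) ≤ a := ha
    have hb' : (0:ℝ) ≤ b := hb
    have := intervalIntegral.integral_lt_integral_of_continuousOn_of_le_of_exists_lt
      (by norm_num : (0:ℝ) < 1/2) (hco a ha') (hco b hb') (by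
        intro t ht
        have h0 := hsin t ⟨ht.1.le, ht.2⟩
        exact hα_mono.monotoneOn (Set.mem_Ici.2 (mul_nonneg ha' h0))
          (Set.mem_Ici.2 (mul_nonneg hb' h0)) (mul_le_mul_of_nonneg_right hab.le h0))
      ⟨1/4, by norm_num, by
        have h1 : Real.sin (2 * Real.pi * (1/4)) = 1 := by
          rw [show 2 * Real.pi * (1/4) = Real.pi / 2 by ring, Real.sin_pi_div_two]
        rw [h1, mul_one, mul_one]
        exact hα_mono ha hb hab⟩
    dsimp only
    linarith
  · have h1 : Tendsto (fun s : ℝ => (1/4) * α (s / 2)) atTop atTop :=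
      (hα_top.comp (tendsto_id.atTop_div_const (by norm_num))).const_mul_atTop (by norm_num)
    refine tendsto_atTop_mono' _ ?_ h1
    filter_upwards [eventually_ge_atTop 0] with s hs
    have hint : IntervalIntegrable (fun t => α (s * Real.sin (2 * Real.pi * t))) volume 0 (1/2) :=
      ContinuousOn.intervalIntegrable_of_Icc (by norm_num) (hco s hs)
    have h2 : ∫ t in (1/8:ℝ)..(1/4), α (s * Real.sin (2 * Real.pi * t)) ≤
        ∫ t in (0:ℝ)..(1/2), α (s * Real.sin (2 * Real.pi * t)) := by
      apply intervalIntegral.integral_mono_interval (by norm_num) (by norm_num) (by norm_num) _ hint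
      refine (ae_restrict_iff' measurableSet_Ioc).2 (Eventually.of_forall ?_)
      intro t ht
      exact hpos _ (mul_nonneg hs (hsin t ⟨ht.1.le, ht.2⟩))
    have h3 : ∫ t in (1/8:ℝ)..(1/4), α (s / 2) ≤
        ∫ t in (1/8:ℝ)..(1/4), α (s * Real.sin (2 * Real.pi * t)) := by
      apply intervalIntegral.integral_mono_on (by norm_num) (by simp)
      · apply ContinuousOn.intervalIntegrable_of_Icc (by norm_num)
        exact (hco s hs).mono (Set.Icc_subset_Icc (by norm_num) (by norm_num))
      · intro t ht
        obtain ⟨ht1, ht2⟩ := ht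
        have hp := Real.pi_pos
        have h4 : 2 / Real.pi * (2 * Real.pi * t) ≤ Real.sin (2 * Real.pi * t) :=
          Real.mul_le_sin (by nlinarith) (by nlinarith)
        have h5 : 2 / Real.pi * (2 * Real.pi * t) = 4 * t := by
          field_simp
          ring
        have h6 : s / 2 ≤ s * Real.sin (2 * Real.pi * t) := by nlinarith
        have h7 : 0 ≤ s / 2 := by linarith
        exact hα_mono.monotoneOn (Set.mem_Ici.2 h7) (Set.mem_Ici.2 (h7.trans h6)) h6
    rw [intervalIntegral.integral_const, smul_eq_mul] at h3
    linarith
end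

section
/- (Theorem 1, semiglobal practical form for the HPF-ES scheme) For every r₀ > 0, δ > 0 and d > 0 there exist t̄ > 0 and γ* > 0 such that for every γ ∈ (0, γ*) and every initial condition (x₀, ȳ₀) with |x₀ − x*| ≤ r₀ and |ȳ₀ − a₀δ(x₀)/2| ≤ γ*, every solution (x, ȳ) : [0,∞) → ℝ × ℝ of the high-pass-filter extremum-seeking system ẋ(t) = −γ·(h(x(t) + δ sin(2πt)) − ȳ(t))·sin(2πt), ẏ̄(t) = γ·(h(x(t) + δ sin(2πt)) − ȳ(t)), with (x(0), ȳ(0)) = (x₀, ȳ₀), is bounded and satisfies |x(t) − x*| ≤ δ + d for all t ≥ t̄/γ. -/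
open Real MeasureTheory intervalIntegral Filter

/-- Zeroth Fourier coefficient of `t ↦ h (x + δ sin (2π t))`. -/
noncomputable def a0 (h : ℝ → ℝ) (δ x : ℝ) : ℝ :=
  2 * ∫ t in (0:ℝ)..1, h (x + δ * Real.sin (2 * Real.pi * t))

namespace HPF

/-- The dither signal. -/
noncomputable def sn (t : ℝ) : ℝ := Real.sin (2 * Real.pi * t)

lemma sn_cont : Continuous sn := by unfold sn; fun_prop

lemma sn_abs (t : ℝ) : |sn t| ≤ 1 := Real.abs_sin_le_one _

lemma sn_periodic (t : ℝ) : sn (t + 1) = sn t := by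
  unfold sn
  rw [mul_add, mul_one, Real.sin_add_two_pi]

lemma sn_int : ∫ t in (0:ℝ)..1, sn t = 0 := by
  have hpi : (2 * Real.pi) ≠ 0 := by positivity
  have hd : ∀ t ∈ Set.uIcc (0:ℝ) 1,
      HasDerivAt (fun t => - Real.cos (2 * Real.pi * t) / (2 * Real.pi)) (sn t) t := by
    intro t _
    have h1 : HasDerivAt (fun t : ℝ => 2 * Real.pi * t) (2 * Real.pi) t := by
      simpa using (hasDerivAt_id t).const_mul (2 * Real.pi)
    have h2 := (h1.cos.neg).div_const (2 * Real.pi)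
    have e : sn t = -(-Real.sin (2 * Real.pi * t) * (2 * Real.pi)) / (2 * Real.pi) := by
      unfold sn
      field_simp
    rw [e]
    exact h2
  rw [intervalIntegral.integral_eq_sub_of_hasDerivAt hd (sn_cont.intervalIntegrable _ _)]
  simp

lemma incr_right (h : ℝ → ℝ) (hc : Continuous h) (xstar : ℝ)
    (hmin : ∀ x : ℝ, x ≠ xstar → h xstar < h x)
    (α : ℝ → ℝ) (hα_mono : StrictMonoOn α (Set.Ici 0)) (hα0 : α 0 = 0)
    (hlb : ∀ x₁ x₂ : ℝ, (x₁ - xstar) * (x₂ - xstar) ≥ 0 → α |x₂ - x₁| ≤ |h x₂ - h x₁|)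
    (a b : ℝ) (ha : xstar ≤ a) (hab : a < b) : α (b - a) ≤ h b - h a := by
  have hinj : Set.InjOn h (Set.Icc xstar b) := by
    intro p hp q hq hpq
    by_contra hne
    have h1 := hlb p q (mul_nonneg (by linarith [hp.1]) (by linarith [hq.1]))
    rw [hpq, sub_self, abs_zero] at h1
    have h2 : 0 < |q - p| := abs_pos.mpr (sub_ne_zero.mpr (Ne.symm hne))
    have h3 := hα_mono (Set.mem_Ici.mpr le_rfl) (Set.mem_Ici.mpr h2.le) h2
    linarith
  have hm := ContinuousOn.strictMonoOn_of_injOn_Icc (by linarith : xstar ≤ b)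
    (hmin b (by linarith : xstar < b).ne').le hc.continuousOn hinj
  have h1 := hm ⟨ha, hab.le⟩ ⟨by linarith, le_rfl⟩ hab
  have h2 := hlb a b (mul_nonneg (by linarith) (by linarith))
  rwa [abs_of_pos (by linarith), abs_of_pos (by linarith)] at h2

lemma incr_left (h : ℝ → ℝ) (hc : Continuous h) (xstar : ℝ)
    (hmin : ∀ x : ℝ, x ≠ xstar → h xstar < h x)
    (α : ℝ → ℝ) (hα_mono : StrictMonoOn α (Set.Ici 0)) (hα0 : α 0 = 0)
    (hlb : ∀ x₁ x₂ : ℝ, (x₁ - xstar) * (x₂ - xstar) ≥ 0 → α |x₂ - x₁| ≤ |h x₂ - h x₁|)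
    (a b : ℝ) (hb : b ≤ xstar) (hab : a < b) : α (b - a) ≤ h a - h b := by
  have key := incr_right (fun x => h (-x)) (by fun_prop) (-xstar)
    (fun x hx => by
      simp only [neg_neg]
      exact hmin _ (fun h' => hx (by linarith)))
    α hα_mono hα0
    (fun p q hpq => by
      have := hlb (-p) (-q) (by nlinarith)
      rw [show |-q - -p| = |q - p| by rw [← abs_neg]; ring_nf] at this
      exact this) (-b) (-a) (by linarith) (by linarith)
  simp only [neg_neg] at key
  rwa [show -a - -b = b - a by ring] at key

/-- Averaged gradient estimate. -/
noncomputable def avg (h : ℝ → ℝ) (δ u : ℝ) : ℝ :=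
  ∫ t in (0:ℝ)..1, (h (u + δ * sn t) - h u) * sn t

lemma avg_bounds (h : ℝ → ℝ) (hc : Continuous h) (xstar : ℝ)
    (hmin : ∀ x : ℝ, x ≠ xstar → h xstar < h x)
    (α : ℝ → ℝ) (hα_cont : ContinuousOn α (Set.Ici 0))
    (hα_mono : StrictMonoOn α (Set.Ici 0)) (hα0 : α 0 = 0)
    (hlb : ∀ x₁ x₂ : ℝ, (x₁ - xstar) * (x₂ - xstar) ≥ 0 → α |x₂ - x₁| ≤ |h x₂ - h x₁|)
    (δ : ℝ) (hδ : 0 < δ) :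
    ∃ c : ℝ, 0 < c ∧ (∀ u, xstar + δ ≤ u → c ≤ avg h δ u) ∧
      (∀ u, u ≤ xstar - δ → avg h δ u ≤ -c) := by
  have hsc := sn_cont
  have hφc : Continuous (fun t => α (δ * |sn t|) * |sn t|) := by
    refine Continuous.mul ?_ (by fun_prop)
    exact hα_cont.comp_continuous (f := fun t => δ * |sn t|) (by fun_prop)
      (fun t => Set.mem_Ici.mpr (by positivity))
  have hic : ∀ u, Continuous (fun t => (h (u + δ * sn t) - h u) * sn t) := by
    intro u; fun_prop
  have hαnn : ∀ s, 0 ≤ s → 0 ≤ α s := by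
    intro s hs
    rw [← hα0]
    exact hα_mono.monotoneOn (Set.mem_Ici.mpr le_rfl) (Set.mem_Ici.mpr hs) hs
  refine ⟨∫ t in (0:ℝ)..1, α (δ * |sn t|) * |sn t|, ?_, ?_, ?_⟩
  · refine intervalIntegral.integral_pos one_pos hφc.continuousOn ?_ ?_
    · intro t _
      exact mul_nonneg (hαnn _ (by positivity)) (abs_nonneg _)
    · refine ⟨1/4, by norm_num, ?_⟩
      have : sn (1/4) = 1 := by
        unfold sn
        rw [show 2 * Real.pi * (1/4) = Real.pi / 2 by ring, Real.sin_pi_div_two]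
      rw [this]
      have h3 := hα_mono (Set.mem_Ici.mpr le_rfl) (Set.mem_Ici.mpr hδ.le) hδ
      simp only [abs_one, mul_one]
      linarith
  · intro u hu
    unfold avg
    refine intervalIntegral.integral_mono_on zero_le_one (hφc.intervalIntegrable _ _)
      ((hic u).intervalIntegrable _ _) ?_
    intro t _
    have hs := abs_le.mp (sn_abs t)
    rcases lt_trichotomy (sn t) 0 with hneg | hz | hpos
    · have := incr_right h hc xstar hmin α hα_mono hα0 hlb (u + δ * sn t) u
        (by nlinarith) (by nlinarith)
      rw [abs_of_neg hneg, show δ * -sn t = u - (u + δ * sn t) by ring]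
      nlinarith
    · simp [hz]
    · have := incr_right h hc xstar hmin α hα_mono hα0 hlb u (u + δ * sn t)
        (by nlinarith) (by nlinarith)
      rw [abs_of_pos hpos, show δ * sn t = (u + δ * sn t) - u by ring]
      rw [show u + (u + δ * sn t - u) = u + δ * sn t by ring]
      nlinarith
  · intro u hu
    unfold avg
    rw [← intervalIntegral.integral_neg]
    refine intervalIntegral.integral_mono_on zero_le_one ((hic u).intervalIntegrable _ _)
      (hφc.neg.intervalIntegrable _ _) ?_
    intro t _
    have hs := abs_le.mp (sn_abs t)
    rcases lt_trichotomy (sn t) 0 with hneg | hz | hpos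
    · have := incr_left h hc xstar hmin α hα_mono hα0 hlb (u + δ * sn t) u
        (by nlinarith) (by nlinarith)
      rw [show u - (u + δ * sn t) = δ * -sn t by ring] at this
      rw [abs_of_neg hneg]
      nlinarith
    · simp [hz]
    · have := incr_left h hc xstar hmin α hα_mono hα0 hlb u (u + δ * sn t)
        (by nlinarith) (by nlinarith)
      rw [show (u + δ * sn t) - u = δ * sn t by ring] at this
      rw [abs_of_pos hpos]
      nlinarith

/-- Confinement over one period. -/
lemma confine (h : ℝ → ℝ) (xstar δ R H d γ K : ℝ) (hδ : 0 < δ) (hK : K = 2 * H + 3)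
    (hH : ∀ u, |u - xstar| ≤ R + δ → |h u| ≤ H)
    (hγ : 0 < γ) (hγd : γ * K ≤ d / 2) (hγ1 : γ * K ≤ 1)
    (x y : ℝ → ℝ) (hxc : Continuous x) (hyc : Continuous y)
    (hx : ∀ t : ℝ, 0 ≤ t → HasDerivAt x (-γ * (h (x t + δ * sn t) - y t) * sn t) t)
    (hy : ∀ t : ℝ, 0 ≤ t → HasDerivAt y (γ * (h (x t + δ * sn t) - y t)) t)
    (n : ℝ) (hn : 0 ≤ n) (hxn : |x n - xstar| + d / 2 ≤ R) (hyn : |y n| ≤ H + 1) :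
    ∀ t ∈ Set.Icc n (n + 1), |x t - x n| ≤ γ * K ∧ |y t - y n| ≤ γ * K ∧ |y t| ≤ H + 1 := by
  have hH' : ∀ p t, |p - x n| ≤ d / 2 → |h (p + δ * sn t)| ≤ H := by
    intro p t hp
    apply hH
    have h1 : |δ * sn t| ≤ δ := by
      rw [abs_mul, abs_of_pos hδ]
      nlinarith [sn_abs t]
    have h2 : p + δ * sn t - xstar = (p - x n) + (x n - xstar) + δ * sn t := by ring
    rw [h2]
    have := abs_add_three (p - x n) (x n - xstar) (δ * sn t)
    linarith
  have hH0 : 0 ≤ H := le_trans (abs_nonneg _) (hH' (x n) 0 (by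
    rw [sub_self, abs_zero]
    have : 0 ≤ |x n - xstar| := abs_nonneg _
    by_contra hneg
    have hKneg : K < 0 := by
      by_contra hh
      push Not at hh hneg
      nlinarith [mul_nonneg hγ.le hh]
    have hd2 : |x n - xstar| ≤ R + δ → False := by
      intro h'
      have := hH (x n) h'
      have := abs_nonneg (h (x n))
      linarith
    have := abs_nonneg (y n)
    push Not at hneg
    nlinarith))
  have hKpos : 0 < K := by linarith
  have key : ∀ t ∈ Set.Icc n (n + 1), ‖(x t - x n, y t - y n)‖ ≤ γ * K * (t - n) := by
    refine image_norm_le_of_norm_deriv_right_lt_deriv_boundary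
      (f := fun t => (x t - x n, y t - y n))
      (f' := fun t => (-γ * (h (x t + δ * sn t) - y t) * sn t, γ * (h (x t + δ * sn t) - y t)))
      (B := fun t => γ * K * (t - n)) (B' := fun _ => γ * K) (by fun_prop) ?_ (by simp) ?_ ?_
    · intro t ht
      have ht0 : 0 ≤ t := le_trans hn ht.1
      exact (((hx t ht0).sub_const _).prodMk ((hy t ht0).sub_const _)).hasDerivWithinAt
    · intro t
      simpa using ((hasDerivAt_id t).sub_const n).const_mul (γ * K)
    · intro t ht heq
      have hle : γ * K * (t - n) ≤ γ * K := by
        have : 0 < γ * K := by positivity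
        nlinarith [ht.2]
      have hx1 : |x t - x n| ≤ γ * K := by
        have := norm_fst_le (x t - x n, y t - y n)
        simp only [Real.norm_eq_abs] at this heq
        linarith
      have hy1 : |y t - y n| ≤ γ * K := by
        have := norm_snd_le (x t - x n, y t - y n)
        simp only [Real.norm_eq_abs] at this heq
        linarith
      have hh := abs_le.mp (hH' (x t) t (by linarith))
      have hyt := abs_le.mp hy1
      have hyn' := abs_le.mp hyn
      have hdif : |h (x t + δ * sn t) - y t| < K := by
        rw [abs_lt]; constructor <;> linarith [hh.1, hh.2, hyt.1, hyt.2, hyn'.1, hyn'.2]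
      have hb : γ * |h (x t + δ * sn t) - y t| < γ * K := mul_lt_mul_of_pos_left hdif hγ
      rw [Prod.norm_def, max_lt_iff]
      simp only [Real.norm_eq_abs, abs_mul, abs_neg, abs_of_pos hγ]
      refine ⟨?_, hb⟩
      have : 0 ≤ γ * |h (x t + δ * sn t) - y t| := by positivity
      nlinarith [sn_abs t, abs_nonneg (sn t)]
  have hxy : ∀ t ∈ Set.Icc n (n + 1), |x t - x n| ≤ γ * K ∧ |y t - y n| ≤ γ * K := by
    intro t ht
    have hle : γ * K * (t - n) ≤ γ * K := by
      have : 0 < γ * K := by positivity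
      nlinarith [ht.2]
    have hk := key t ht
    have h1 := norm_fst_le (x t - x n, y t - y n)
    have h2 := norm_snd_le (x t - x n, y t - y n)
    simp only [Real.norm_eq_abs] at h1 h2 hk
    exact ⟨by linarith, by linarith⟩
  have hyb : ∀ t ∈ Set.Icc n (n + 1), ‖y t‖ ≤ H + 1 := by
    intro t ht
    rw [Real.norm_eq_abs, abs_le]
    have hyn' := abs_le.mp hyn
    constructor
    · have := image_le_of_deriv_right_lt_deriv_boundary (f := fun t => - y t)
        (f' := fun t => - (γ * (h (x t + δ * sn t) - y t))) (a := n) (b := n + 1)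
        (B := fun _ => H + 1) (B' := fun _ => 0) (by fun_prop)
        (fun t ht => ((hy t (le_trans hn ht.1)).neg).hasDerivWithinAt)
        (by linarith [hyn'.1]) (fun t => hasDerivAt_const _ _)
        (fun t ht heq => by
          have hh := abs_le.mp (hH' (x t) t (by linarith [(hxy t ⟨ht.1, ht.2.le⟩).1]))
          have : 0 < γ * (h (x t + δ * sn t) - y t) := mul_pos hγ (by linarith [hh.1])
          linarith) ht
      linarith
    · have := image_le_of_deriv_right_lt_deriv_boundary (f := fun t => y t)
        (f' := fun t => (γ * (h (x t + δ * sn t) - y t))) (a := n) (b := n + 1)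
        (B := fun _ => H + 1) (B' := fun _ => 0) (by fun_prop)
        (fun t ht => ((hy t (le_trans hn ht.1))).hasDerivWithinAt)
        (by linarith [hyn'.2]) (fun t => hasDerivAt_const _ _)
        (fun t ht heq => by
          have hh := abs_le.mp (hH' (x t) t (by linarith [(hxy t ⟨ht.1, ht.2.le⟩).1]))
          have : 0 < γ * (y t - h (x t + δ * sn t)) := mul_pos hγ (by linarith [hh.2])
          linarith) ht
      linarith
  intro t ht
  exact ⟨(hxy t ht).1, (hxy t ht).2, hyb t ht⟩

lemma psi_int (h : ℝ → ℝ) (hc : Continuous h) (δ u v n : ℝ) :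
    ∫ t in n..(n + 1), (h (u + δ * sn t) - v) * sn t = avg h δ u := by
  have hsc := sn_cont
  have hp : Function.Periodic (fun t => (h (u + δ * sn t) - v) * sn t) 1 := by
    intro t
    simp only [sn_periodic]
  rw [hp.intervalIntegral_add_eq n 0, zero_add]
  have : (fun t => (h (u + δ * sn t) - v) * sn t) =
      fun t => (h (u + δ * sn t) - h u) * sn t + (h u - v) * sn t := by
    funext t; ring
  rw [this, intervalIntegral.integral_add, intervalIntegral.integral_const_mul, sn_int]
  · simp [avg]
  · exact Continuous.intervalIntegrable (by fun_prop) _ _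
  · exact Continuous.intervalIntegrable (by fun_prop) _ _

/-- One-period averaging estimate. -/
lemma step (h : ℝ → ℝ) (hc : Continuous h) (xstar δ R L d γ K : ℝ) (hδ : 0 < δ)
    (hL0 : 0 ≤ L)
    (hL : ∀ u v, |u - xstar| ≤ R + δ → |v - xstar| ≤ R + δ → |h u - h v| ≤ L * |u - v|)
    (hγ : 0 < γ) (hγd : γ * K ≤ d / 2)
    (x y : ℝ → ℝ) (hxc : Continuous x) (hyc : Continuous y)
    (hx : ∀ t : ℝ, 0 ≤ t → HasDerivAt x (-γ * (h (x t + δ * sn t) - y t) * sn t) t)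
    (n : ℝ) (hn : 0 ≤ n) (hxn : |x n - xstar| + d / 2 ≤ R)
    (hcf : ∀ t ∈ Set.Icc n (n + 1), |x t - x n| ≤ γ * K ∧ |y t - y n| ≤ γ * K) :
    |x (n + 1) - x n + γ * avg h δ (x n)| ≤ γ * (γ * K * (L + 1)) := by
  have hsc := sn_cont
  have h1 : ∫ t in n..(n + 1), -γ * (h (x t + δ * sn t) - y t) * sn t = x (n + 1) - x n := by
    refine intervalIntegral.integral_eq_sub_of_hasDerivAt ?_ ?_
    · intro t ht
      rw [Set.uIcc_of_le (by linarith)] at ht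
      exact hx t (le_trans hn ht.1)
    · exact Continuous.intervalIntegrable (by fun_prop) _ _
  rw [← h1, ← psi_int h hc δ (x n) (y n) n, ← intervalIntegral.integral_const_mul,
    ← intervalIntegral.integral_add]
  · have := intervalIntegral.norm_integral_le_of_norm_le_const (a := n) (b := n + 1)
      (C := γ * (γ * K * (L + 1)))
      (f := fun t => -γ * (h (x t + δ * sn t) - y t) * sn t
        + γ * ((h (x n + δ * sn t) - y n) * sn t)) ?_
    · simpa using this
    · intro t ht
      rw [Set.uIoc_of_le (by linarith)] at ht
      obtain ⟨hxt, hyt⟩ := hcf t ⟨ht.1.le, ht.2⟩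
      have hs : |δ * sn t| ≤ δ := by
        rw [abs_mul, abs_of_pos hδ]
        nlinarith [sn_abs t]
      have hl := hL (x t + δ * sn t) (x n + δ * sn t)
        (by
          have := abs_add_three (x t - x n) (x n - xstar) (δ * sn t)
          rw [show x t + δ * sn t - xstar = (x t - x n) + (x n - xstar) + δ * sn t by ring]
          linarith)
        (by
          have := abs_add_le (x n - xstar) (δ * sn t)
          rw [show x n + δ * sn t - xstar = (x n - xstar) + δ * sn t by ring]
          have := abs_nonneg (x t - x n)
          linarith)
      rw [show x t + δ * sn t - (x n + δ * sn t) = x t - x n by ring] at hl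
      have e : -γ * (h (x t + δ * sn t) - y t) * sn t
        + γ * ((h (x n + δ * sn t) - y n) * sn t) =
        γ * (((y t - y n) - (h (x t + δ * sn t) - h (x n + δ * sn t))) * sn t) := by ring
      rw [e, Real.norm_eq_abs, abs_mul, abs_of_pos hγ, abs_mul]
      refine mul_le_mul_of_nonneg_left ?_ hγ.le
      have h3 := abs_sub (y t - y n) (h (x t + δ * sn t) - h (x n + δ * sn t))
      have h4 : L * |x t - x n| ≤ L * (γ * K) := mul_le_mul_of_nonneg_left hxt hL0
      have h5 := sn_abs t
      have h6 := abs_nonneg ((y t - y n) - (h (x t + δ * sn t) - h (x n + δ * sn t)))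
      nlinarith
  · exact Continuous.intervalIntegrable (by fun_prop) _ _
  · exact Continuous.intervalIntegrable (by fun_prop) _ _

lemma bounds (h : ℝ → ℝ) (hs : ContDiff ℝ (⊤ : ℕ∞) h) (xstar R : ℝ) :
    ∃ H L : ℝ, 0 ≤ H ∧ 0 ≤ L ∧ (∀ u, |u - xstar| ≤ R → |h u| ≤ H) ∧
      (∀ u v, |u - xstar| ≤ R → |v - xstar| ≤ R → |h u - h v| ≤ L * |u - v|) := by
  have hmem : ∀ u, |u - xstar| ≤ R → u ∈ Metric.closedBall xstar R := by
    intro u hu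
    rwa [Metric.mem_closedBall, Real.dist_eq]
  have hcomp := isCompact_closedBall xstar R
  obtain ⟨H, hH⟩ := hcomp.exists_bound_of_continuousOn (f := h) hs.continuous.continuousOn
  obtain ⟨L, hL⟩ := hcomp.exists_bound_of_continuousOn (f := deriv h)
    (hs.continuous_deriv (by exact_mod_cast le_top)).continuousOn
  refine ⟨max H 0, max L 0, le_max_right _ _, le_max_right _ _, ?_, ?_⟩
  · intro u hu
    exact le_trans (hH u (hmem u hu)) (le_max_left _ _)
  · intro u v hu hv
    exact Convex.norm_image_sub_le_of_norm_deriv_le (𝕜 := ℝ)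
      (fun p _ => (hs.differentiable (by simp)).differentiableAt)
      (fun p hp => le_trans (hL p hp) (le_max_left _ _)) (convex_closedBall xstar R)
      (hmem v hv) (hmem u hu)

end HPF

/-- Theorem 1, semiglobal practical form for the HPF-ES scheme. -/
theorem hpf_es_semiglobal_practical (h : ℝ → ℝ) (hsmooth : ContDiff ℝ (⊤ : ℕ∞) h)
    (xstar : ℝ) (hmin : ∀ x : ℝ, x ≠ xstar → h xstar < h x)
    (α : ℝ → ℝ) (hα_cont : ContinuousOn α (Set.Ici 0))
    (hα_mono : StrictMonoOn α (Set.Ici 0)) (hα0 : α 0 = 0)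
    (hα_top : Tendsto α atTop atTop)
    (hlb : ∀ x₁ x₂ : ℝ, (x₁ - xstar) * (x₂ - xstar) ≥ 0 → α |x₂ - x₁| ≤ |h x₂ - h x₁|)
    (r₀ δ d : ℝ) (hr₀ : 0 < r₀) (hδ : 0 < δ) (hd : 0 < d) :
    ∃ tbar γstar : ℝ, 0 < tbar ∧ 0 < γstar ∧
      ∀ γ : ℝ, γ ∈ Set.Ioo 0 γstar →
        ∀ x₀ ybar₀ : ℝ, |x₀ - xstar| ≤ r₀ → |ybar₀ - a0 h δ x₀ / 2| ≤ γstar →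
          ∀ x ybar : ℝ → ℝ, Differentiable ℝ x → Differentiable ℝ ybar →
            x 0 = x₀ → ybar 0 = ybar₀ →
            (∀ t : ℝ, 0 ≤ t →
              HasDerivAt x
                (-γ * (h (x t + δ * Real.sin (2 * Real.pi * t)) - ybar t)
                  * Real.sin (2 * Real.pi * t)) t) →
            (∀ t : ℝ, 0 ≤ t →
              HasDerivAt ybar
                (γ * (h (x t + δ * Real.sin (2 * Real.pi * t)) - ybar t)) t) →
            (∃ M : ℝ, ∀ t : ℝ, 0 ≤ t → |x t| ≤ M ∧ |ybar t| ≤ M) ∧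
            (∀ t : ℝ, tbar / γ ≤ t → |x t - xstar| ≤ δ + d) := by
  have hc := hsmooth.continuous
  obtain ⟨c, hc0, hcr, hcl⟩ := HPF.avg_bounds h hc xstar hmin α hα_cont hα_mono hα0 hlb δ hδ
  set ρ := max r₀ (δ + d / 2) with hρ
  obtain ⟨H, L, hH0, hL0, hH, hL⟩ := HPF.bounds h hsmooth xstar (ρ + d / 2 + δ)
  obtain ⟨K, hK⟩ : ∃ K : ℝ, K = 2 * H + 3 := ⟨_, rfl⟩
  have hKpos : 0 < K := by linarith
  have hρr : r₀ ≤ ρ := le_max_left _ _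
  have hρd : δ + d / 2 ≤ ρ := le_max_right _ _
  refine ⟨2 * r₀ / c + 1, min (min 1 (1 / K)) (min (d / 2 / K) (c / 2 / (K * (L + 1)))),
    by positivity, by positivity, ?_⟩
  intro γ hγm x₀ ybar₀ hx₀ hy₀ x y hxd hyd hx0 hy0 hx hy
  obtain ⟨hγ, hγlt⟩ := hγm
  rw [lt_min_iff, lt_min_iff, lt_min_iff] at hγlt
  obtain ⟨⟨hγ1, hγK⟩, hγd, hγc⟩ := hγlt
  rw [lt_div_iff₀ (by positivity)] at hγK hγd hγc
  have hy₀' : |ybar₀ - a0 h δ x₀ / 2| ≤ 1 :=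
    le_trans hy₀ (le_trans (min_le_left _ _) (min_le_left _ _))
  have hxc := hxd.continuous
  have hyc := hyd.continuous
  have hyinit : |y 0| ≤ H + 1 := by
    have e : a0 h δ x₀ / 2 = ∫ t in (0:ℝ)..1, h (x₀ + δ * HPF.sn t) := by
      unfold a0 HPF.sn; ring
    have hb := intervalIntegral.norm_integral_le_of_norm_le_const (a := 0) (b := 1)
      (C := H) (f := fun t => h (x₀ + δ * HPF.sn t)) (by
        intro t _
        apply hH
        have h1 : |δ * HPF.sn t| ≤ δ := by
          rw [abs_mul, abs_of_pos hδ]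
          nlinarith [HPF.sn_abs t]
        rw [show x₀ + δ * HPF.sn t - xstar = (x₀ - xstar) + δ * HPF.sn t by ring]
        have := abs_add_le (x₀ - xstar) (δ * HPF.sn t)
        linarith)
    rw [← e, Real.norm_eq_abs] at hb
    simp only [sub_zero, abs_one, mul_one] at hb
    rw [hy0, show ybar₀ = (a0 h δ x₀ / 2) + (ybar₀ - a0 h δ x₀ / 2) by ring]
    have := abs_add_le (a0 h δ x₀ / 2) (ybar₀ - a0 h δ x₀ / 2)
    linarith
  have conf : ∀ n : ℕ, |x n - xstar| ≤ ρ → |y n| ≤ H + 1 →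
      ∀ t ∈ Set.Icc (n:ℝ) (n + 1),
        |x t - x n| ≤ γ * K ∧ |y t - y n| ≤ γ * K ∧ |y t| ≤ H + 1 := by
    intro n h1 h2
    exact HPF.confine h xstar δ (ρ + d / 2) H d γ K hδ hK hH hγ hγd.le hγK.le x y hxc hyc hx hy n
      (Nat.cast_nonneg n) (by linarith) h2
  have hγc0 : 0 < γ * c := mul_pos hγ hc0
  have bound_le : ∀ n : ℕ, max (δ + d / 2) (r₀ - n * (γ * c / 2)) ≤ ρ := by
    intro n
    refine max_le hρd ?_
    have : (0:ℝ) ≤ n * (γ * c / 2) := by positivity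
    linarith
  have ind : ∀ n : ℕ, |x n - xstar| ≤ max (δ + d / 2) (r₀ - n * (γ * c / 2)) ∧ |y n| ≤ H + 1 := by
    intro n
    induction n with
    | zero =>
      refine ⟨?_, by simpa using hyinit⟩
      simp only [Nat.cast_zero, zero_mul, sub_zero, hx0]
      exact le_trans hx₀ (le_max_right _ _)
    | succ n ih =>
      obtain ⟨ih1, ih2⟩ := ih
      have hxρ := le_trans ih1 (bound_le n)
      have hcf := conf n hxρ ih2
      have hend := hcf (n + 1) ⟨by linarith, le_rfl⟩
      push_cast
      refine ⟨?_, hend.2.2⟩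
      have hst := HPF.step h hc xstar δ (ρ + d / 2) L d γ K hδ hL0 hL hγ hγd.le x y hxc hyc hx n
        (Nat.cast_nonneg n) (by linarith) (fun t ht => ⟨(hcf t ht).1, (hcf t ht).2.1⟩)
      have hsm : γ * (γ * K * (L + 1)) ≤ γ * (c / 2) :=
        mul_le_mul_of_nonneg_left (by linarith) hγ.le
      have hst' := abs_le.mp (le_trans hst hsm)
      have hinc := abs_le.mp hend.1
      have ihb := abs_le.mp ih1
      rw [abs_le]
      have m1 : δ + d / 2 ≤ max (δ + d / 2) (r₀ - (n + 1) * (γ * c / 2)) := le_max_left _ _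
      have m2 : r₀ - (n + 1) * (γ * c / 2) ≤ max (δ + d / 2) (r₀ - (n + 1) * (γ * c / 2)) :=
        le_max_right _ _
      have m3 : max (δ + d / 2) (r₀ - n * (γ * c / 2)) - γ * c / 2 ≤
          max (δ + d / 2) (r₀ - (n + 1) * (γ * c / 2)) := by
        rw [sub_le_iff_le_add]
        refine max_le ?_ ?_ <;> linarith
      rcases le_or_gt (xstar + δ) (x n) with hr | hr
      · have := mul_le_mul_of_nonneg_left (hcr (x n) hr) hγ.le
        constructor <;> linarith [hst'.1, hst'.2, hinc.1, hinc.2, ihb.1, ihb.2]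
      · rcases le_or_gt (x n) (xstar - δ) with hl | hl
        · have := mul_le_mul_of_nonneg_left (hcl (x n) hl) hγ.le
          constructor <;> linarith [hst'.1, hst'.2, hinc.1, hinc.2, ihb.1, ihb.2]
        · constructor <;> linarith [hinc.1, hinc.2]
  have floor_in : ∀ t : ℝ, 0 ≤ t → t ∈ Set.Icc ((⌊t⌋₊ : ℕ) : ℝ) ((⌊t⌋₊ : ℕ) + 1) :=
    fun t ht => ⟨Nat.floor_le ht, (Nat.lt_floor_add_one t).le⟩
  constructor
  · refine ⟨max (|xstar| + ρ + d) (H + 1), ?_⟩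
    intro t ht
    obtain ⟨i1, i2⟩ := ind ⌊t⌋₊
    have hxρ := le_trans i1 (bound_le ⌊t⌋₊)
    obtain ⟨c1, _, c3⟩ := conf ⌊t⌋₊ hxρ i2 t (floor_in t ht)
    refine ⟨le_trans ?_ (le_max_left _ _), le_trans c3 (le_max_right _ _)⟩
    have := abs_add_three (x t - x ⌊t⌋₊) (x ⌊t⌋₊ - xstar) xstar
    rw [show x t - x ⌊t⌋₊ + (x ⌊t⌋₊ - xstar) + xstar = x t by ring] at this
    linarith
  · intro t ht
    have ht0 : 0 ≤ t := le_trans (by positivity) ht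
    obtain ⟨i1, i2⟩ := ind ⌊t⌋₊
    have hxρ := le_trans i1 (bound_le ⌊t⌋₊)
    obtain ⟨c1, _, _⟩ := conf ⌊t⌋₊ hxρ i2 t (floor_in t ht0)
    have hfl := (floor_in t ht0).2
    have hsmall : r₀ - (⌊t⌋₊ : ℕ) * (γ * c / 2) ≤ 0 := by
      rw [div_le_iff₀ hγ] at ht
      have h1 : 2 * r₀ / c ≤ (⌊t⌋₊ : ℕ) * γ := by nlinarith
      rw [div_le_iff₀ hc0] at h1
      linarith
    have hmx : max (δ + d / 2) (r₀ - (⌊t⌋₊ : ℕ) * (γ * c / 2)) = δ + d / 2 :=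
      max_eq_left (by linarith)
    rw [hmx] at i1
    have := abs_add_le (x t - x ⌊t⌋₊) (x ⌊t⌋₊ - xstar)
    rw [show x t - x ⌊t⌋₊ + (x ⌊t⌋₊ - xstar) = x t - xstar by ring] at this
    linarith
end
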